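/- Suppose R := liminf_{i→∞} a_i is finite (so R ≥ 2). Then M(α,γ_*) ≥ M_1, where M_1 := (1/4)·(1 − 2/(R_* − θ_2))·(1 − (1/max{4, R_**})·(1 + θ_1²/(1−θ_1))) / (1 + (1/max{4, R_**})·(θ_1 − 1/(R_* − θ_2))). In particular ρ(α) ≥ M_1. -/

import Mathlib

open Filter Finset

attribute [local instance] Classical.propDecidable

/-- Distance from `x` to the nearest integer, `‖x‖`. -/
noncomputable def nint (x : ℝ) : ℝ := |x - round x|

/-- The two-sided inhomogeneous approximation constant
`M(α,γ) = liminf_{|n|→∞} |n|·‖nα-γ‖`. -/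
noncomputable def Mval (α γ : ℝ) : ℝ :=
  Filter.liminf (fun n : ℤ => (|n| : ℝ) * nint (n * α - γ)) Filter.cofinite

/-- `ρ(α) = sup { M(α,γ) : γ ∉ ℤ + αℤ }`. -/
noncomputable def rho (α : ℝ) : ℝ :=
  sSup {m : ℝ | ∃ γ : ℝ, (¬∃ p q : ℤ, γ = (p : ℝ) + (q : ℝ) * α) ∧ m = Mval α γ}

/-- The tails `α_i` of the nearest integer continued fraction expansion of `α`. -/
noncomputable def nicfT (α : ℝ) : ℕ → ℝ
  | 0 => α
  | i + 1 =>
    if Int.fract (nicfT α i)⁻¹ ≤ 1 / 2 then Int.fract (nicfT α i)⁻¹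
    else 1 - Int.fract (nicfT α i)⁻¹

/-- The partial quotients `a_i` (meaningful for `i ≥ 1`) of the NICF expansion. -/
noncomputable def nicfA (α : ℝ) : ℕ → ℤ
  | 0 => 0
  | i + 1 => if Int.fract (nicfT α i)⁻¹ ≤ 1 / 2 then ⌊(nicfT α i)⁻¹⌋ else ⌈(nicfT α i)⁻¹⌉

/-- The signs `ε_i` of the NICF expansion (`ε_1 = 1`). -/
noncomputable def nicfE (α : ℝ) : ℕ → ℤ
  | 0 => 1
  | 1 => 1
  | i + 2 => if Int.fract (nicfT α i)⁻¹ ≤ 1 / 2 then 1 else -1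

/-- `nicfD α n = D_{n-1} = α_0 α_1 ⋯ α_{n-1}` (so `nicfD α 0 = 1`, `nicfD α 1 = α`). -/
noncomputable def nicfD (α : ℝ) (n : ℕ) : ℝ := ∏ j ∈ Finset.range n, nicfT α j

/-- The number of indices `1 ≤ k ≤ i` with `a_k` odd. -/
noncomputable def oddIdx (α : ℝ) (i : ℕ) : ℕ :=
  ((Finset.Icc 1 i).filter fun k => Odd (nicfA α k)).card

/-- `λ_i`: zero if `a_i` is even, `(-1)^j` if `a_i = a_{n_j}` is the `j`-th odd partial
quotient. -/
noncomputable def lamStar (α : ℝ) (i : ℕ) : ℤ :=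
  if Odd (nicfA α i) then (-1) ^ oddIdx α i else 0

/-- `γ_* = Σ_{i≥1} (a_i - 1 + ε_i + λ_i)/2 · D_{i-1}`. -/
noncomputable def gammaStar (α : ℝ) : ℝ :=
  ∑' k : ℕ,
    (((nicfA α (k + 1) : ℝ) - 1 + (nicfE α (k + 1) : ℝ) + (lamStar α (k + 1) : ℝ)) / 2) *
      nicfD α (k + 1)

/-- `λ'_i`: zero if `a_i` is even, one if `a_i` is odd. -/
noncomputable def lamStar2 (α : ℝ) (i : ℕ) : ℤ := if Odd (nicfA α i) then 1 else 0

/-- `γ_** = Σ_{i≥1} (a_i + λ'_i)/2 · D_{i-1}`. -/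
noncomputable def gammaStar2 (α : ℝ) : ℝ :=
  ∑' k : ℕ, (((nicfA α (k + 1) : ℝ) + (lamStar2 α (k + 1) : ℝ)) / 2) * nicfD α (k + 1)

/-- The denominators `q_i`: `q_0 = 1`, `q_1 = a_1`, `q_i = a_i q_{i-1} + ε_i q_{i-2}`. -/
noncomputable def qseq (α : ℝ) : ℕ → ℤ
  | 0 => 1
  | 1 => nicfA α 1
  | i + 2 => nicfA α (i + 2) * qseq α (i + 1) + nicfE α (i + 2) * qseq α i

/-- `ᾱ_i = q_{i-1}/q_i` (with `ᾱ_0 = 0`). -/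
noncomputable def abar (α : ℝ) (i : ℕ) : ℝ :=
  if i = 0 then 0 else (qseq α (i - 1) : ℝ) / (qseq α i : ℝ)

/-- `δ_i = -(-ε_1)(-ε_2)⋯(-ε_{i+1})`. -/
noncomputable def deltaSeq (α : ℝ) (i : ℕ) : ℤ := -∏ j ∈ Finset.Icc 1 (i + 1), (-nicfE α j)

/-- `d_n^- = (Σ_{i=1}^n t_i δ_{i-1} q_{i-1}) / (δ_{n-1} q_n)` for `γ_*` (so `t_i = λ_i`). -/
noncomputable def dminus (α : ℝ) (n : ℕ) : ℝ :=
  (∑ i ∈ Finset.Icc 1 n, (lamStar α i : ℝ) * (deltaSeq α (i - 1) : ℝ) * (qseq α (i - 1) : ℝ)) /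
    ((deltaSeq α (n - 1) : ℝ) * (qseq α n : ℝ))

/-- `d_n^+ = (Σ_{i=n+1}^∞ t_i D_{i-1}) / D_{n-1}` for `γ_*` (so `t_i = λ_i`). -/
noncomputable def dplus (α : ℝ) (n : ℕ) : ℝ :=
  (∑' k : ℕ, (lamStar α (n + 1 + k) : ℝ) * nicfD α (n + 1 + k)) / nicfD α n

/-- `d_n^-` for `γ_**` (so `t_i = λ'_i`). -/
noncomputable def dminus2 (α : ℝ) (n : ℕ) : ℝ :=
  (∑ i ∈ Finset.Icc 1 n, (lamStar2 α i : ℝ) * (deltaSeq α (i - 1) : ℝ) * (qseq α (i - 1) : ℝ)) /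
    ((deltaSeq α (n - 1) : ℝ) * (qseq α n : ℝ))

/-- `d_n^+` for `γ_**` (so `t_i = λ'_i`). -/
noncomputable def dplus2 (α : ℝ) (n : ℕ) : ℝ :=
  (∑' k : ℕ, (lamStar2 α (n + 1 + k) : ℝ) * nicfD α (n + 1 + k)) / nicfD α n

/-- `i ∈ S(γ_*)`: `|d_i^-| ≤ 1 - ᾱ_i` and `-(1-ε_{i+1}α_i) ≤ d_i^+ ≤ 1+ε_{i+1}α_i`. -/
def inS (α : ℝ) (i : ℕ) : Prop :=
  |dminus α i| ≤ 1 - abar α i ∧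
    -(1 - (nicfE α (i + 1) : ℝ) * nicfT α i) ≤ dplus α i ∧
      dplus α i ≤ 1 + (nicfE α (i + 1) : ℝ) * nicfT α i

/-- `i ∈ S(γ_**)`. -/
def inS2 (α : ℝ) (i : ℕ) : Prop :=
  |dminus2 α i| ≤ 1 - abar α i ∧
    -(1 - (nicfE α (i + 1) : ℝ) * nicfT α i) ≤ dplus2 α i ∧
      dplus2 α i ≤ 1 + (nicfE α (i + 1) : ℝ) * nicfT α i

/-- The remainders `γ_i` of the alpha-expansion of `γ`: `γ_0 = γ`,
`γ_{i+1} = {γ_i/α_i}`. -/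
noncomputable def gSeq (α γ : ℝ) : ℕ → ℝ
  | 0 => γ
  | i + 1 => Int.fract (gSeq α γ i / nicfT α i)

/-- The coefficients `c_i` (for `i ≥ 1`) of the alpha-expansion of `γ`:
`c_{i+1} = ⌊γ_i/α_i⌋`. -/
noncomputable def cCoef (α γ : ℝ) (i : ℕ) : ℤ := ⌊gSeq α γ (i - 1) / nicfT α (i - 1)⌋

/-
Since `2γ_* = 1 + α + d_0^+`, the substitution `u = 2n - 1`, `v = -(2p + 1)` turns
`|n| * |nα - γ_* - p|` into `|u| * |v + αu - d_0^+| / 4`, up to a bounded error in the first factor,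
and the claim becomes a lower bound `4 M_1` for this product over odd `u` and `v`. One step of the
continued fraction maps `(u, v)` to another pair of odd integers, so that the expansion may be
started at an index from which on all partial quotients are at least `R`.

At each index two affine forms in the current pair matter: the future form `v + t u - z`, where
`(t, z)` comes from the digits still to be read, and the past form `u - ε (x v - y)`, where `(x, y)`
comes from the digits already read. A step multiplies each of them by a constant, up to sign, and
leaves `|past form| * |future form| / (1 + ε x t)` unchanged. It is therefore enough to bound this
quotient at one index. The past form contracts under the step, and we choose the last index at which
it has absolute value at least `1`. If the future form is at least `1` there as well, we are done.
Otherwise `v = ±1`, and either `u = ±1`, or `u` has the sign opposite to `v` and `|u| ≤ a` for the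
next digit `a`. Then the two forms are governed by `|u|` and by its complement `V` in the digit `a`:
if both are at least `3` the product is large, and otherwise the pair at this index or at the next
one is `(±1, ±1)`. There the product is one of four expressions in `(x, y, t, z)`, and they are
bounded by inequalities for `(t, z)` and `(x, y)` that are preserved along the expansion.
-/

section Approximation

variable {α : ℝ}

theorem nint_nonneg (x : ℝ) : 0 ≤ nint x := abs_nonneg _

theorem nint_le_abs_sub_intCast (x : ℝ) (l : ℤ) : nint x ≤ |x - l| := round_le x l

theorem exists_rat_abs_sub_mul_sq_den_lt_one (hα : Irrational α) (N : ℕ) :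
    ∃ q : ℚ, |α - q| * (q.den : ℝ) ^ 2 < 1 ∧ N < q.den := by
  obtain ⟨ε, hε, hε0⟩ := ((hα.eventually_forall_le_dist_cast_rat_of_den_le N).filter_mono
    nhdsWithin_le_nhds |>.and (self_mem_nhdsWithin : Set.Ioi (0 : ℝ) ∈ _)).exists
  obtain ⟨n, hn⟩ := exists_nat_one_div_lt hε0
  obtain ⟨q, hq, hqn⟩ := Real.exists_rat_abs_sub_le_and_den_le α n.succ_pos
  have hden : (1 : ℝ) ≤ q.den := by exact_mod_cast q.pos
  have hqn' : (q.den : ℝ) ≤ n + 1 := by exact_mod_cast hqn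
  rw [Nat.cast_succ, le_div_iff₀ (by positivity)] at hq
  refine ⟨q, ?_, ?_⟩
  · nlinarith [abs_nonneg (α - q)]
  · by_contra! hle
    have hdist : ε ≤ |α - q| := hε q hle
    rw [div_lt_iff₀ (by positivity)] at hn
    have hlt : 1 < |α - q| * ((n + 1 + 1) * q.den) :=
      hn.trans_le (mul_le_mul hdist (by nlinarith) (by positivity) (abs_nonneg _))
    linarith

theorem exists_int_mul_num_sub_eq_den_mul (q : ℚ) (r : ℤ) :
    ∃ n l : ℤ, q.den ≤ n ∧ n ≤ 2 * q.den ∧ n * q.num - r = q.den * l := by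
  obtain ⟨x, y, hxy⟩ := Rat.isCoprime_num_den q
  have hden : (0 : ℤ) < q.den := by exact_mod_cast q.pos
  refine ⟨q.den + (x * r) % q.den, q.num - q.num * (x * r / q.den) - r * y,
    by linarith [Int.emod_nonneg (x * r) hden.ne'],
    by linarith [Int.emod_lt_of_pos (x * r) hden], ?_⟩
  rw [Int.emod_def]
  linear_combination r * hxy

-- With `p/q` a good approximation of `α`, choose `n ∈ [q, 2q]` with `np ≡ round (qγ) [ZMOD q]`.
theorem exists_int_abs_mul_nint_le_six (hα : Irrational α) (γ : ℝ) (N : ℕ) :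
    ∃ n : ℤ, N < n ∧ (|n| : ℝ) * nint (n * α - γ) ≤ 6 := by
  obtain ⟨q, hq, hN⟩ := exists_rat_abs_sub_mul_sq_den_lt_one hα N
  obtain ⟨n, l, hqn, hn2, hl⟩ := exists_int_mul_num_sub_eq_den_mul q (round ((q.den : ℝ) * γ))
  have hD : (0 : ℝ) < q.den := by exact_mod_cast q.pos
  have hqn' : (q.den : ℝ) ≤ n := by exact_mod_cast hqn
  have hn2' : (n : ℝ) ≤ 2 * q.den := by exact_mod_cast hn2
  have hl' : (n : ℝ) * q.num - round ((q.den : ℝ) * γ) = q.den * l := by exact_mod_cast hl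
  have hsplit : (q.den : ℝ) * (n * α - γ - l) =
      q.den * n * (α - q) + (round ((q.den : ℝ) * γ) - q.den * γ) := by
    have hnum : (q : ℝ) * q.den = q.num := by exact_mod_cast Rat.mul_den_eq_num q
    linear_combination hl' + n * hnum
  have hround : |(round ((q.den : ℝ) * γ) : ℝ) - q.den * γ| ≤ 1 / 2 := by
    rw [abs_sub_comm]
    exact abs_sub_round _
  have hclose : (q.den : ℝ) * |n * α - γ - l| ≤ 5 / 2 := by
    calc (q.den : ℝ) * |n * α - γ - l|
        = |q.den * n * (α - q) + (round ((q.den : ℝ) * γ) - q.den * γ)| := by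
          rw [← hsplit, abs_mul, abs_of_pos hD]
      _ ≤ q.den * n * |α - q| + 1 / 2 := by
          refine (abs_add_le _ _).trans (add_le_add (le_of_eq ?_) hround)
          rw [abs_mul, abs_of_nonneg (by nlinarith)]
      _ ≤ 2 * (|α - q| * q.den ^ 2) + 1 / 2 := by nlinarith [mul_nonneg hD.le (abs_nonneg (α - q))]
      _ ≤ 5 / 2 := by linarith
  refine ⟨n, by exact_mod_cast (by exact_mod_cast hN : (N : ℤ) < q.den).trans_le hqn, ?_⟩
  calc (|n| : ℝ) * nint (n * α - γ) ≤ 2 * q.den * |n * α - γ - l| := by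
        rw [abs_of_nonneg (hD.le.trans hqn')]
        exact mul_le_mul hn2' (nint_le_abs_sub_intCast _ l) (nint_nonneg _) (by positivity)
    _ ≤ 6 := by linarith

theorem frequently_abs_mul_nint_le_six (hα : Irrational α) (γ : ℝ) :
    ∃ᶠ n : ℤ in cofinite, (|n| : ℝ) * nint (n * α - γ) ≤ 6 := by
  rw [frequently_cofinite_iff_infinite]
  refine Set.infinite_of_not_bddAbove ?_
  rintro ⟨b, hb⟩
  obtain ⟨n, hbn, hn⟩ := exists_int_abs_mul_nint_le_six hα γ b.toNat
  have := hb hn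
  omega

theorem Mval_le_six (hα : Irrational α) (γ : ℝ) : Mval α γ ≤ 6 :=
  liminf_le_of_frequently_le (frequently_abs_mul_nint_le_six hα γ)
    (isBoundedUnder_of ⟨0, fun _ => mul_nonneg (abs_nonneg _) (nint_nonneg _)⟩)

theorem le_Mval_of_eventually_le (hα : Irrational α) {γ c : ℝ}
    (h : ∀ᶠ n : ℤ in cofinite, c ≤ (|n| : ℝ) * nint (n * α - γ)) : c ≤ Mval α γ :=
  le_liminf_of_le (IsCoboundedUnder.of_frequently_le (frequently_abs_mul_nint_le_six hα γ)) h

theorem Mval_le_rho (hα : Irrational α) {γ : ℝ} (hγ : ¬∃ p q : ℤ, γ = (p : ℝ) + (q : ℝ) * α) :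
    Mval α γ ≤ rho α := by
  refine le_csSup ⟨6, ?_⟩ ⟨γ, hγ, rfl⟩
  rintro _ ⟨δ, -, rfl⟩
  exact Mval_le_six hα δ

theorem eventually_lt_abs_intCast (B : ℝ) : ∀ᶠ n : ℤ in cofinite, B < |(n : ℝ)| :=
  (tendsto_norm_cocompact_atTop.comp Int.tendsto_coe_cofinite).eventually_gt_atTop B

/- If `‖nα - γ‖` is so small that the error term `C ‖nα - γ‖` matters, `|n|` has to be bounded;
otherwise the error term is negligible. -/
theorem le_Mval_of_forall_le_add_mul_nint (hα : Irrational α) {γ c C : ℝ} (hC : 0 ≤ C)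
    (h : ∀ n : ℤ, c ≤ (|(n : ℝ)| + C) * nint (n * α - γ)) : c ≤ Mval α γ := by
  refine le_of_forall_sub_le fun η hη => le_Mval_of_eventually_le hα ?_
  filter_upwards [eventually_lt_abs_intCast (|c| * (C + 1) / η)] with n hn
  have hn' : |c| * (C + 1) < |(n : ℝ)| * η := by rwa [div_lt_iff₀ hη] at hn
  have hcn := h n
  have hx := nint_nonneg (n * α - γ)
  set x := nint (n * α - γ)
  obtain hsmall | hlarge := le_or_gt ((C + 1) * x) η
  · nlinarith
  · have hmul : |c| * (C + 1) ≤ (|(n : ℝ)| * x) * (C + 1) := by nlinarith [abs_nonneg (n : ℝ)]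
    have := le_of_mul_le_mul_right hmul (by linarith)
    linarith [le_abs_self c]

end Approximation

section Nicf

/-- The condition every tail of an infinite NICF expansion satisfies: irrational and in
`(0, 1/2)`. -/
structure IsNicfTail (x : ℝ) : Prop where
  irrational : Irrational x
  pos : 0 < x
  lt_half : x < 1 / 2

theorem neg_one_pow_abs_cast (n : ℕ) : |(((-1) ^ n : ℤ) : ℝ)| = 1 := by simp

theorem hasSum_sub_succ {f : ℕ → ℝ} (hf : Summable f) :
    HasSum (fun k => f k - f (k + 1)) (f 0) := by
  simpa using hf.hasSum.sub ((hasSum_nat_add_iff' 1).2 hf.hasSum)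

variable {α : ℝ}

theorem nicfE_eq_one_or_neg_one (i : ℕ) : nicfE α i = 1 ∨ nicfE α i = -1 := by
  match i with
  | 0 => exact Or.inl rfl
  | 1 => exact Or.inl rfl
  | i + 2 =>
    simp only [nicfE]
    split_ifs
    exacts [Or.inl rfl, Or.inr rfl]

theorem nicfD_zero : nicfD α 0 = 1 := prod_range_zero _

theorem nicfD_succ (n : ℕ) : nicfD α (n + 1) = nicfD α n * nicfT α n := prod_range_succ _ _

/-- The sign of the first nonzero `λ_i` with `i > k`. -/
noncomputable def nextSign (α : ℝ) (k : ℕ) : ℤ := -(-1) ^ oddIdx α k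

theorem nextSign_eq_one_or_neg_one (k : ℕ) : nextSign α k = 1 ∨ nextSign α k = -1 := by
  unfold nextSign
  rcases neg_one_pow_eq_or ℤ (oddIdx α k) with h | h <;> simp [h]

theorem nextSign_mul_self (k : ℕ) : (nextSign α k : ℝ) * nextSign α k = 1 := by
  rcases nextSign_eq_one_or_neg_one (α := α) k with h | h <;> simp [h]

theorem oddIdx_succ (k : ℕ) :
    oddIdx α (k + 1) = oddIdx α k + if Odd (nicfA α (k + 1)) then 1 else 0 := by
  unfold oddIdx
  rw [← insert_Icc_right_eq_Icc_add_one (by lia), filter_insert]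
  split_ifs with h
  · rw [card_insert_of_notMem (by simp)]
  · rfl

theorem nextSign_succ_of_odd {k : ℕ} (h : Odd (nicfA α (k + 1))) :
    nextSign α (k + 1) = -nextSign α k := by
  simp only [nextSign, oddIdx_succ, if_pos h, pow_succ, mul_neg_one]

theorem nextSign_succ_of_not_odd {k : ℕ} (h : ¬Odd (nicfA α (k + 1))) :
    nextSign α (k + 1) = nextSign α k := by
  simp only [nextSign, oddIdx_succ, if_neg h, add_zero]

theorem lamStar_succ_of_odd {k : ℕ} (h : Odd (nicfA α (k + 1))) :
    lamStar α (k + 1) = nextSign α k := by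
  simp only [lamStar, nextSign, oddIdx_succ, if_pos h, pow_succ, mul_neg_one]

theorem lamStar_of_not_odd {k : ℕ} (h : ¬Odd (nicfA α k)) : lamStar α k = 0 := if_neg h

theorem abs_lamStar_le_one (k : ℕ) : |(lamStar α k : ℝ)| ≤ 1 := by
  unfold lamStar
  split_ifs
  · exact (neg_one_pow_abs_cast _).le
  · simp

/-- `|d_k^+|`, written as `d_k^+` times the sign of the leading term of the series `d_k^+`. -/
noncomputable def normDplus (α : ℝ) (k : ℕ) : ℝ := nextSign α k * dplus α k

namespace IsNicfTail

theorem irrational_fract_inv (hα : IsNicfTail α) : Irrational (Int.fract α⁻¹) :=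
  hα.irrational.inv.sub_intCast _

theorem tail (hα : IsNicfTail α) (i : ℕ) : IsNicfTail (nicfT α i) := by
  induction i with
  | zero => exact hα
  | succ i ih =>
    have hirr := ih.irrational_fract_inv
    have hhalf : Int.fract (nicfT α i)⁻¹ ≠ 1 / 2 := by
      simpa using hirr.ne_rat (1 / 2)
    rw [nicfT]
    split_ifs with hle
    · exact ⟨hirr, lt_of_le_of_ne (Int.fract_nonneg _) hirr.ne_zero.symm, lt_of_le_of_ne hle hhalf⟩
    · exact ⟨by simpa using hirr.intCast_sub 1, by linarith [Int.fract_lt_one (nicfT α i)⁻¹],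
        by linarith⟩

theorem nicfA_add_nicfE_mul_nicfT (hα : IsNicfTail α) (i : ℕ) :
    nicfA α (i + 1) + nicfE α (i + 2) * nicfT α (i + 1) = (nicfT α i)⁻¹ := by
  have hfloor := Int.floor_add_fract (nicfT α i)⁻¹
  have hceil := Int.ceil_sub_self_eq (hα.tail i).irrational_fract_inv.ne_zero
  simp only [nicfT, nicfA, nicfE]
  split_ifs
  · push_cast
    linarith
  · push_cast
    linarith

theorem nicfT_mul (hα : IsNicfTail α) (i : ℕ) :
    nicfT α i * (nicfA α (i + 1) + nicfE α (i + 2) * nicfT α (i + 1)) = 1 := by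
  rw [hα.nicfA_add_nicfE_mul_nicfT, mul_inv_cancel₀ (hα.tail i).pos.ne']

theorem two_le_nicfA (hα : IsNicfTail α) (i : ℕ) :
    2 ≤ nicfA α (i + 1) ∧ (nicfA α (i + 1) = 2 → nicfE α (i + 2) = 1) := by
  have hinv : 2 < (nicfT α i)⁻¹ := by
    rw [lt_inv_comm₀ (by norm_num) (hα.tail i).pos]
    linarith [(hα.tail i).lt_half]
  have hfloor : 2 ≤ ⌊(nicfT α i)⁻¹⌋ := Int.le_floor.2 (by exact_mod_cast hinv.le)
  have hceil : 2 < ⌈(nicfT α i)⁻¹⌉ := Int.lt_ceil.2 (by exact_mod_cast hinv)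
  simp only [nicfA, nicfE]
  split_ifs
  · exact ⟨hfloor, fun _ => rfl⟩
  · exact ⟨hceil.le, fun h => by lia⟩

theorem nicfD_pos (hα : IsNicfTail α) (n : ℕ) : 0 < nicfD α n :=
  prod_pos fun j _ => (hα.tail j).pos

theorem nicfD_add_le (hα : IsNicfTail α) (k n : ℕ) :
    nicfD α (k + n) ≤ nicfD α k * (1 / 2) ^ n := by
  induction n with
  | zero => simp
  | succ n ih =>
    rw [← add_assoc, nicfD_succ, pow_succ, ← mul_assoc]
    exact mul_le_mul ih (hα.tail _).lt_half.le (hα.tail _).pos.le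
      (mul_nonneg (hα.nicfD_pos k).le (by positivity))

theorem nicfD_le_nicfD (hα : IsNicfTail α) (k n : ℕ) : nicfD α (k + n) ≤ nicfD α k :=
  (hα.nicfD_add_le k n).trans
    (mul_le_of_le_one_right (hα.nicfD_pos k).le (pow_le_one₀ (by norm_num) (by norm_num)))

theorem nicfD_eq_add (hα : IsNicfTail α) (k : ℕ) :
    nicfD α k = nicfA α (k + 1) * nicfD α (k + 1) + nicfE α (k + 2) * nicfD α (k + 2) := by
  rw [nicfD_succ (k + 1), nicfD_succ k]
  linear_combination -nicfD α k * hα.nicfT_mul k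

theorem abs_lamStar_mul_nicfD_le (hα : IsNicfTail α) (k j : ℕ) :
    ‖(lamStar α (k + 1 + j) : ℝ) * nicfD α (k + 1 + j)‖ ≤ nicfD α k * (1 / 2) ^ j := by
  rw [Real.norm_eq_abs, abs_mul, abs_of_pos (hα.nicfD_pos _)]
  calc |(lamStar α (k + 1 + j) : ℝ)| * nicfD α (k + 1 + j)
      ≤ 1 * nicfD α (k + j + 1) := by
        rw [add_right_comm]
        exact mul_le_mul_of_nonneg_right (abs_lamStar_le_one _) (hα.nicfD_pos _).le
    _ ≤ nicfD α (k + j) := (one_mul _).trans_le (hα.nicfD_le_nicfD _ 1)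
    _ ≤ nicfD α k * (1 / 2) ^ j := hα.nicfD_add_le k j

theorem summable_lamStar_mul_nicfD (hα : IsNicfTail α) (k : ℕ) :
    Summable fun j : ℕ => (lamStar α (k + 1 + j) : ℝ) * nicfD α (k + 1 + j) :=
  Summable.of_norm_bounded (summable_geometric_two.mul_left (nicfD α k))
    (hα.abs_lamStar_mul_nicfD_le k)

theorem dplus_mul_nicfD (hα : IsNicfTail α) (k : ℕ) :
    dplus α k * nicfD α k = ∑' j : ℕ, (lamStar α (k + 1 + j) : ℝ) * nicfD α (k + 1 + j) :=
  div_mul_cancel₀ _ (hα.nicfD_pos k).ne'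

theorem abs_dplus_le_two (hα : IsNicfTail α) (k : ℕ) : |dplus α k| ≤ 2 := by
  have htsum := tsum_of_norm_bounded (hasSum_geometric_two.mul_left (nicfD α k))
    (hα.abs_lamStar_mul_nicfD_le k)
  rw [dplus, abs_div, abs_of_pos (hα.nicfD_pos k), div_le_iff₀ (hα.nicfD_pos k), mul_comm]
  exact htsum

theorem dplus_eq (hα : IsNicfTail α) (k : ℕ) :
    dplus α k = nicfT α k * (lamStar α (k + 1) + dplus α (k + 1)) := by
  have hrec : dplus α k * nicfD α k =
      lamStar α (k + 1) * nicfD α (k + 1) + dplus α (k + 1) * nicfD α (k + 1) := by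
    rw [hα.dplus_mul_nicfD, hα.dplus_mul_nicfD, (hα.summable_lamStar_mul_nicfD k).tsum_eq_zero_add]
    simp only [add_comm, add_left_comm]
  rw [nicfD_succ] at hrec
  exact mul_right_cancel₀ (hα.nicfD_pos k).ne' (by linear_combination hrec)

theorem summable_nicfD_add (hα : IsNicfTail α) :
    Summable fun k : ℕ => nicfD α k + nicfE α (k + 1) * nicfD α (k + 1) := by
  have hgeom : Summable (nicfD α) :=
    Summable.of_nonneg_of_le (fun k => (hα.nicfD_pos k).le)
      (fun k => by simpa [nicfD_zero] using hα.nicfD_add_le 0 k) summable_geometric_two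
  refine hgeom.add (((summable_nat_add_iff 1).2 hgeom).of_norm_bounded fun k => ?_)
  rw [norm_mul, Real.norm_of_nonneg (hα.nicfD_pos _).le]
  rcases nicfE_eq_one_or_neg_one (α := α) (k + 1) with h | h <;> simp [h]

-- By `nicfD_eq_add` the part `a_i - 1 + ε_i` of the coefficients telescopes.
theorem two_mul_gammaStar (hα : IsNicfTail α) : 2 * gammaStar α = 1 + α + dplus α 0 := by
  have hsum := (hasSum_sub_succ hα.summable_nicfD_add).add (hα.summable_lamStar_mul_nicfD 0).hasSum
  rw [← hα.dplus_mul_nicfD, nicfD_zero, zero_add, nicfD_succ, nicfD_zero] at hsum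
  have hγ : gammaStar α = (1 + nicfE α 1 * (1 * α) + dplus α 0 * 1) / 2 := by
    refine Eq.trans (tsum_congr fun k => ?_) (hsum.div_const 2).tsum_eq
    rw [add_comm 1 k]
    linear_combination (-1 / 2) * hα.nicfD_eq_add k
  have hε : nicfE α 1 = 1 := rfl
  rw [hγ, hε]
  push_cast
  ring

theorem abs_normDplus_le_two (hα : IsNicfTail α) (k : ℕ) : |normDplus α k| ≤ 2 := by
  have hdplus := hα.abs_dplus_le_two k
  rcases nextSign_eq_one_or_neg_one (α := α) k with h | h <;> simpa [normDplus, h] using hdplus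

theorem normDplus_of_odd (hα : IsNicfTail α) {k : ℕ} (h : Odd (nicfA α (k + 1))) :
    normDplus α k = nicfT α k * (1 - normDplus α (k + 1)) := by
  rw [normDplus, normDplus, hα.dplus_eq k, lamStar_succ_of_odd h, nextSign_succ_of_odd h]
  push_cast
  linear_combination nicfT α k * nextSign_mul_self (α := α) k

theorem normDplus_of_not_odd (hα : IsNicfTail α) {k : ℕ} (h : ¬Odd (nicfA α (k + 1))) :
    normDplus α k = nicfT α k * normDplus α (k + 1) := by
  rw [normDplus, normDplus, hα.dplus_eq k, lamStar_of_not_odd h, nextSign_succ_of_not_odd h]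
  push_cast
  ring

theorem normDplus_approx (hα : IsNicfTail α) (n k : ℕ) :
    -(2 * (1 / 2 : ℝ) ^ n) ≤ normDplus α k ∧
      normDplus α k ≤ nicfT α k + 2 * (1 / 2 : ℝ) ^ n := by
  induction n generalizing k with
  | zero =>
    have habs := abs_le.1 (hα.abs_normDplus_le_two k)
    have hpos := (hα.tail k).pos
    rw [pow_zero]
    constructor <;> linarith
  | succ n ih =>
    obtain ⟨hlow, hup⟩ := ih (k + 1)
    have hk := hα.tail k
    have hk' := (hα.tail (k + 1)).lt_half
    have hδ : (0 : ℝ) < (1 / 2) ^ n := by positivity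
    rw [pow_succ]
    by_cases h : Odd (nicfA α (k + 1))
    · rw [hα.normDplus_of_odd h]
      constructor <;> nlinarith [hk.pos, hk.lt_half]
    · rw [hα.normDplus_of_not_odd h]
      constructor <;> nlinarith [hk.pos, hk.lt_half]

theorem normDplus_mem_Icc (hα : IsNicfTail α) (k : ℕ) :
    normDplus α k ∈ Set.Icc 0 (nicfT α k) := by
  have hlim : Tendsto (fun n : ℕ => 2 * (1 / 2 : ℝ) ^ n) atTop (nhds 0) := by
    simpa using (tendsto_pow_atTop_nhds_zero_of_lt_one (by norm_num : (0 : ℝ) ≤ 1 / 2)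
      (by norm_num)).const_mul 2
  constructor
  · exact le_of_tendsto' (neg_zero (G := ℝ) ▸ hlim.neg) fun n => (hα.normDplus_approx n k).1
  · exact ge_of_tendsto' (add_zero (nicfT α k) ▸ hlim.const_add _)
      fun n => (hα.normDplus_approx n k).2

end IsNicfTail

end Nicf

section Constants

/-- The constants of the theorem: `r = R`, `s = R_*`, `X = max {4, R_**}`, `θ = θ₁`,
`η = θ₁ / (1 - θ₁)`, `φ = θ₂` and `m = 4 M₁`, through the polynomial relations they satisfy. -/
structure BoundConstants (r s X θ η φ m : ℝ) : Prop where
  cases : (r = 2 ∧ s = 3 ∧ X = 4 ∧ φ = 1 / 2) ∨ (r = 3 ∧ s = 3 ∧ X = 4 ∧ φ * (X - φ) = 1) ∨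
    (r = 4 ∧ s = 5 ∧ X = 4 ∧ φ * (X - φ) = 1) ∨
    (5 ≤ r ∧ s = r ∧ X = r + 1 ∧ φ * (X - φ) = 1) ∨
    (6 ≤ r ∧ s = r + 1 ∧ X = r ∧ φ * (X - φ) = 1)
  theta_mul : θ * (s + θ) = 1
  theta_pos : 0 < θ
  eta_mul : η * (1 - θ) = θ
  phi_pos : 0 < φ
  phi_le : φ ≤ 1 / 2
  m_mul : m * ((s - φ) * (X + θ) - 1) = (X + θ - 1 - η) * (s - φ - 2)

namespace BoundConstants

variable {r s X θ η φ m : ℝ}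

theorem three_le_s (h : BoundConstants r s X θ η φ m) : 3 ≤ s := by
  rcases h.cases with h | h | h | h | h <;> linarith

theorem four_le_X (h : BoundConstants r s X θ η φ m) : 4 ≤ X := by
  rcases h.cases with h | h | h | h | h <;> linarith

theorem two_le_r (h : BoundConstants r s X θ η φ m) : 2 ≤ r := by
  rcases h.cases with h | h | h | h | h <;> linarith

theorem r_le_s (h : BoundConstants r s X θ η φ m) : r ≤ s := by
  rcases h.cases with h | h | h | h | h <;> linarith

theorem s_le_r_add_one (h : BoundConstants r s X θ η φ m) : s ≤ r + 1 := by
  rcases h.cases with h | h | h | h | h <;> linarith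

theorem X_le_s_add_one (h : BoundConstants r s X θ η φ m) : X ≤ s + 1 := by
  rcases h.cases with h | h | h | h | h <;> linarith

theorem s_le_X_add_one (h : BoundConstants r s X θ η φ m) : s ≤ X + 1 := by
  rcases h.cases with h | h | h | h | h <;> linarith

theorem r_le_X (h : BoundConstants r s X θ η φ m) : r ≤ X := by
  rcases h.cases with h | h | h | h | h <;> linarith

theorem X_le_r_add_one (h : BoundConstants r s X θ η φ m) (h2 : r ≠ 2) : X ≤ r + 1 := by
  rcases h.cases with h | h | h | h | h
  · exact absurd h.1 h2
  all_goals linarith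

theorem three_le_r (h : BoundConstants r s X θ η φ m) (h2 : r ≠ 2) : 3 ≤ r := by
  rcases h.cases with h | h | h | h | h
  · exact absurd h.1 h2
  all_goals linarith

theorem five_le_s (h : BoundConstants r s X θ η φ m) (h4 : 4 ≤ r) : 5 ≤ s := by
  rcases h.cases with h | h | h | h | h <;> linarith

theorem s_eq_three_or_r_eq_four_or_five_le_r (h : BoundConstants r s X θ η φ m) :
    s = 3 ∨ r = 4 ∨ 5 ≤ r := by
  rcases h.cases with h | h | h | h | h
  · exact Or.inl h.2.1
  · exact Or.inl h.2.1
  · exact Or.inr (Or.inl h.1)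
  · exact Or.inr (Or.inr h.1)
  · exact Or.inr (Or.inr (by linarith))

theorem s_eq_r_or_six_le_r (h : BoundConstants r s X θ η φ m) (h5 : 5 ≤ r) : s = r ∨ 6 ≤ r := by
  rcases h.cases with h | h | h | h | h
  iterate 3 linarith
  exacts [Or.inl h.2.1, Or.inr h.1]

theorem X_eq_s_add_one_or_eq_s_sub_one (h : BoundConstants r s X θ η φ m) :
    X = s + 1 ∨ X = s - 1 ∧ 4 ≤ r := by
  rcases h.cases with h | h | h | h | h
  · exact Or.inl (by linarith)
  · exact Or.inl (by linarith)
  · exact Or.inr ⟨by linarith, by linarith⟩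
  · exact Or.inl (by linarith)
  · exact Or.inr ⟨by linarith, by linarith⟩

theorem X_eq_four_of_s_eq_three (h : BoundConstants r s X θ η φ m) (h3 : s = 3) : X = 4 := by
  rcases h.cases with h | h | h | h | h <;> linarith

theorem eq_of_r_eq_two (h : BoundConstants r s X θ η φ m) (h2 : r = 2) :
    s = 3 ∧ X = 4 ∧ φ = 1 / 2 := by
  rcases h.cases with h | h | h | h | h
  · exact h.2
  all_goals linarith

theorem eq_of_r_eq_four (h : BoundConstants r s X θ η φ m) (h4 : r = 4) : s = 5 ∧ X = 4 := by
  rcases h.cases with h | h | h | h | h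
  · linarith
  · linarith
  · exact ⟨h.2.1, h.2.2.1⟩
  all_goals linarith

theorem r_eq_two_or_phi_mul (h : BoundConstants r s X θ η φ m) : r = 2 ∨ φ * (X - φ) = 1 := by
  rcases h.cases with h | h | h | h | h
  · exact Or.inl h.1
  all_goals exact Or.inr h.2.2.2

theorem theta_le_of_one_le (h : BoundConstants r s X θ η φ m) {c : ℝ} (hc : 0 ≤ c)
    (h1 : 1 ≤ c * (s + c)) : θ ≤ c := by
  by_contra! hlt
  nlinarith [h.theta_mul, h.three_le_s]

theorem le_theta_of_le_one (h : BoundConstants r s X θ η φ m) {c : ℝ} (h1 : c * (s + c) ≤ 1) :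
    c ≤ θ := by
  by_contra! hlt
  nlinarith [h.theta_mul, h.three_le_s, h.theta_pos]

theorem theta_le (h : BoundConstants r s X θ η φ m) : θ ≤ 0.303 :=
  h.theta_le_of_one_le (by norm_num) (by linarith [h.three_le_s])

theorem theta_le_of_five_le_s (h : BoundConstants r s X θ η φ m) (h5 : 5 ≤ s) : θ ≤ 0.1927 :=
  h.theta_le_of_one_le (by norm_num) (by linarith)

theorem theta_mul_s_le_one (h : BoundConstants r s X θ η φ m) : θ * s ≤ 1 := by
  nlinarith [h.theta_mul, sq_nonneg θ]

theorem eta_mul_s (h : BoundConstants r s X θ η φ m) : η * s = 1 + θ := by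
  have hne : 1 - θ ≠ 0 := by linarith [h.theta_le]
  exact mul_left_cancel₀ hne (by linear_combination s * h.eta_mul + h.theta_mul)

theorem eta_mul_s_add_theta (h : BoundConstants r s X θ η φ m) : η * (s + θ) = 1 + η := by
  linear_combination h.eta_mul_s - h.eta_mul

theorem eta_pos (h : BoundConstants r s X θ η φ m) : 0 < η := by
  nlinarith [h.eta_mul, h.theta_le, h.theta_pos]

theorem theta_le_eta (h : BoundConstants r s X θ η φ m) : θ ≤ η := by
  nlinarith [h.eta_mul, h.eta_pos, h.theta_pos]

theorem eta_le (h : BoundConstants r s X θ η φ m) : η ≤ 0.4344 := by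
  nlinarith [h.eta_mul_s, h.three_le_s, h.theta_le]

theorem eta_le_of_five_le_s (h : BoundConstants r s X θ η φ m) (h5 : 5 ≤ s) : η ≤ 0.2386 := by
  nlinarith [h.eta_mul_s, h.theta_le_of_five_le_s h5]

theorem phi_bounds_of_r_eq_four (h : BoundConstants r s X θ η φ m) (h4 : r = 4) :
    0.2679 ≤ φ ∧ φ ≤ 0.268 := by
  have hφ := h.r_eq_two_or_phi_mul.resolve_left (by linarith)
  obtain ⟨-, rfl⟩ := h.eq_of_r_eq_four h4
  constructor <;> by_contra! <;> nlinarith [h.phi_pos, h.phi_le]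

theorem phi_ge_of_s_eq_three (h : BoundConstants r s X θ η φ m) (h3 : s = 3) : 0.26 ≤ φ := by
  obtain h2 | hφ := h.r_eq_two_or_phi_mul
  · linarith [(h.eq_of_r_eq_two h2).2.2]
  · obtain rfl := h.X_eq_four_of_s_eq_three h3
    by_contra!
    nlinarith [h.phi_pos]

theorem five_lt_denom (h : BoundConstants r s X θ η φ m) : 5 < (s - φ) * (X + θ) - 1 := by
  nlinarith [h.three_le_s, h.four_le_X, h.theta_pos, h.phi_le]

theorem factor_pos (h : BoundConstants r s X θ η φ m) : 0 < X + θ - 1 - η := by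
  linarith [h.four_le_X, h.theta_pos, h.eta_le]

theorem m_pos (h : BoundConstants r s X θ η φ m) : 0 < m := by
  refine pos_of_mul_pos_left (b := (s - φ) * (X + θ) - 1) ?_ (by linarith [h.five_lt_denom])
  rw [h.m_mul]
  exact mul_pos h.factor_pos (by linarith [h.three_le_s, h.phi_le])

theorem m_le_of_le (h : BoundConstants r s X θ η φ m) {c : ℝ}
    (hc : (X + θ - 1 - η) * (s - φ - 2) ≤ c * ((s - φ) * (X + θ) - 1)) : m ≤ c :=
  le_of_mul_le_mul_right (h.m_mul.trans_le hc) (by linarith [h.five_lt_denom])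

theorem m_mul_s_le (h : BoundConstants r s X θ η φ m) : m * s ≤ s - 2 := by
  have hs := h.three_le_s
  have hφ := h.phi_le
  refine le_of_mul_le_mul_right (a := (s - φ) * (X + θ) - 1) ?_ (by linarith [h.five_lt_denom])
  calc m * s * ((s - φ) * (X + θ) - 1)
      = (X + θ - 1 - η) * (s * (s - φ - 2)) := by linear_combination s * h.m_mul
    _ ≤ (X + θ - 1 - η) * ((s - 2) * (s - φ)) :=
        mul_le_mul_of_nonneg_left (by linarith [h.phi_pos]) h.factor_pos.le
    _ = (s - 2) * ((X + θ - 1 - η) * (s - φ)) := by ring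
    _ ≤ (s - 2) * ((s - φ) * (X + θ) - 1) :=
        mul_le_mul_of_nonneg_left (by nlinarith [h.eta_pos]) (by linarith)

theorem m_le_one (h : BoundConstants r s X θ η φ m) : m ≤ 1 := by
  nlinarith [h.m_mul_s_le, h.three_le_s, h.m_pos]

theorem m_le_of_s_eq_three (h : BoundConstants r s X θ η φ m) (h3 : s = 3) : m ≤ 0.2 := by
  obtain rfl := h.X_eq_four_of_s_eq_three h3
  have hφ := h.phi_ge_of_s_eq_three h3
  subst h3
  have hθ : 0.3 ≤ θ := h.le_theta_of_le_one (by norm_num)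
  have hη : 0.43 ≤ η := by linarith [h.eta_mul_s]
  exact h.m_le_of_le (by nlinarith [h.theta_le, h.phi_le])

theorem m_le_of_r_eq_two (h : BoundConstants r s X θ η φ m) (h2 : r = 2) : m ≤ 0.148 := by
  obtain ⟨rfl, rfl, rfl⟩ := h.eq_of_r_eq_two h2
  have hθ : 0.3 ≤ θ := h.le_theta_of_le_one (by norm_num)
  have hη : 0.433 ≤ η := by linarith [h.eta_mul_s]
  exact h.m_le_of_le (by linarith [h.theta_le])

theorem m_le_of_r_eq_four (h : BoundConstants r s X θ η φ m) (h4 : r = 4) : m ≤ 0.43 := by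
  have hφ := h.phi_bounds_of_r_eq_four h4
  obtain ⟨rfl, rfl⟩ := h.eq_of_r_eq_four h4
  have hθ : 0.192 ≤ θ := h.le_theta_of_le_one (by norm_num)
  have hη : 0.238 ≤ η := by linarith [h.eta_mul_s]
  exact h.m_le_of_le (by nlinarith [h.theta_le_of_five_le_s le_rfl])

theorem m_mul_le_of_r_eq_two (h : BoundConstants r s X θ η φ m) (h2 : r = 2) :
    m * (s + θ - φ) ≤ (s + θ - 2 - η) * (1 - φ) := by
  have hm := h.m_le_of_r_eq_two h2
  obtain ⟨rfl, rfl, rfl⟩ := h.eq_of_r_eq_two h2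
  nlinarith [h.le_theta_of_le_one (c := 0.3) (by norm_num), h.m_pos, h.theta_le, h.eta_le]

theorem m_mul_le_of_X_eq_s_add_one (h : BoundConstants r s X θ η φ m)
    (hφ : φ * (X - φ) = 1) (hX : X = s + 1) : m * (s + θ - φ) ≤ (s + θ - 2 - η) * (1 - φ) := by
  subst hX
  have hs := h.three_le_s
  have hθφ : θ ^ 2 ≤ φ := by
    by_contra!
    nlinarith [h.theta_mul, h.theta_pos, h.phi_pos]
  have hsum : m * (θ + φ) ≤ 2 * (θ + φ - η) := by
    refine le_of_mul_le_mul_left (a := s) ?_ (by linarith)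
    calc s * (m * (θ + φ)) = m * s * (θ + φ) := by ring
      _ ≤ (s - 2) * (θ + φ) :=
          mul_le_mul_of_nonneg_right h.m_mul_s_le (by linarith [h.theta_pos, h.phi_pos])
      _ ≤ s * (2 * (θ + φ - η)) := by nlinarith [h.eta_mul_s, h.theta_mul]
  refine le_of_mul_le_mul_left (a := s + 1 - φ) ?_ (by linarith [h.phi_le])
  calc (s + 1 - φ) * (m * (s + θ - φ)) = m * ((s - φ) * (s + 1 + θ) - 1) + m * (θ + φ) := by
        linear_combination -m * hφ
    _ ≤ (s + 1 + θ - 1 - η) * (s - φ - 2) + 2 * (θ + φ - η) := add_le_add h.m_mul.le hsum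
    _ = (s + 1 - φ) * ((s + θ - 2 - η) * (1 - φ)) := by
        linear_combination (s + θ - 2 - η) * hφ

theorem m_mul_le_of_X_eq_s_sub_one (h : BoundConstants r s X θ η φ m)
    (hφ : φ * (X - φ) = 1) (hX : X = s - 1) (h4 : 4 ≤ r) :
    m * (s + θ - φ) ≤ (s + θ - 2 - η) * (1 - φ) := by
  subst hX
  have hfac : 0 < s + θ - 2 - η := by linarith [h.factor_pos]
  have hφ1 := h.phi_le
  have hsub : s - φ - 2 = (s - 1 - φ) * (1 - φ) := by linear_combination hφ
  have hdenom : (s - 1 - φ) * (s + θ - φ) ≤ (s - φ) * (s - 1 + θ) - 1 := by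
    nlinarith [h.five_le_s h4, h.theta_pos, h.theta_le]
  refine le_of_mul_le_mul_left (a := (s - φ) * (s - 1 + θ) - 1) ?_ (by linarith [h.five_lt_denom])
  calc ((s - φ) * (s - 1 + θ) - 1) * (m * (s + θ - φ))
      = (s + θ - 2 - η) * ((s - 1 - φ) * (s + θ - φ) * (1 - φ)) := by
        linear_combination (s + θ - φ) * h.m_mul + (s + θ - 2 - η) * (s + θ - φ) * hsub
    _ ≤ (s + θ - 2 - η) * (((s - φ) * (s - 1 + θ) - 1) * (1 - φ)) :=
        mul_le_mul_of_nonneg_left (mul_le_mul_of_nonneg_right hdenom (by linarith)) hfac.le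
    _ = ((s - φ) * (s - 1 + θ) - 1) * ((s + θ - 2 - η) * (1 - φ)) := by ring

theorem m_mul_s_add_theta_sub_phi_le (h : BoundConstants r s X θ η φ m) :
    m * (s + θ - φ) ≤ (s + θ - 2 - η) * (1 - φ) := by
  obtain h2 | hφ := h.r_eq_two_or_phi_mul
  · exact h.m_mul_le_of_r_eq_two h2
  · obtain hX | ⟨hX, h4⟩ := h.X_eq_s_add_one_or_eq_s_sub_one
    · exact h.m_mul_le_of_X_eq_s_add_one hφ hX
    · exact h.m_mul_le_of_X_eq_s_sub_one hφ hX h4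

end BoundConstants

end Constants

section States

/-- A pair `(α_k, |d_k^+|)` describing the expansion after the index `k`, as far as it matters for
the numerical estimates. -/
structure FutureState (r s X θ φ t z : ℝ) : Prop where
  t_pos : 0 < t
  t_le_half : t ≤ 1 / 2
  t_mul_le : t * (r - 1 / 2) ≤ 1
  z_nonneg : 0 ≤ z
  z_le_t : z ≤ t
  t_le_phi_add : t ≤ φ + z
  phi_mul_le : (1 - φ) * (s + θ - t) ≤ (1 - t + z) * (s + θ - φ)
  edge_le : (s - φ - 2) * (X + θ - t) ≤ (1 - t - z) * ((s - φ) * (X + θ) - 1)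

/-- A pair `(q_{k-1} / q_k, d_k^-)`, up to signs, describing the expansion up to the index `k`, as
far as it matters for the numerical estimates. -/
structure PastState (r η m x y : ℝ) : Prop where
  x_nonneg : 0 ≤ x
  x_le : x ≤ 5 / 8
  y_le_eta : y ≤ η
  y_le_mul : y ≤ x * (1 + η)
  neg_mul_le_y : -(x * η) ≤ y
  m_le : m ≤ 1 - x - y
  m_mul_le : ∀ t, 0 ≤ t → t ≤ 1 / 2 → t * (r - 1 / 2) ≤ 1 → m * (1 + x * t) ≤ 1 - x + y

/-- A past state that can be followed by the sign `ε = -1`. -/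
structure StrongPastState (r s X θ η φ m x y : ℝ) : Prop extends PastState r η m x y where
  x_le_two_fifths : x ≤ 2 / 5
  x_le_of_four_le : 4 ≤ r → x ≤ 27 / 100
  x_mul_le_of_five_le : 5 ≤ r → x * (r - 1 / 4) ≤ 1
  eta_mul_sub_le : η * x - y ≤ θ
  edge_le : ∀ t, 0 ≤ t → t ≤ 1 / 2 →
    (X + θ - 1 - η) * (1 - x * t) ≤ (1 - x + y) * (X + θ - t)
  m_mul_le_of_future : ∀ t z, FutureState r s X θ φ t z →
    m * (1 - x * t) ≤ (1 - x - y) * (1 - t + z)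

variable {r s X θ η φ m : ℝ}

theorem FutureState.pos {t z : ℝ} (hf : FutureState r s X θ φ t z) : 0 < 1 - t + z := by
  linarith [hf.t_le_half, hf.z_nonneg]

theorem PastState.neg_eta_le_y {x y : ℝ} (hp : PastState r η m x y) (hη : 0 < η) : -η ≤ y := by
  nlinarith [hp.neg_mul_le_y, hp.x_nonneg, hp.x_le]

theorem PastState.of_mul_eq_one {x B w : ℝ} (hη : 0 ≤ η) (hx : x * B = 1) (hB : 8 / 5 ≤ B)
    (hwB : w ≤ η * B) (hw : w ≤ 1 + η) (hw' : -η ≤ w) (hm : m * B ≤ B - 1 - w)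
    (hm' : ∀ t, 0 ≤ t → t ≤ 1 / 2 → t * (r - 1 / 2) ≤ 1 → m * (B + t) ≤ B - 1 + w) :
    PastState r η m x (x * w) := by
  have hx0 : 0 ≤ x := by
    by_contra!
    nlinarith
  refine ⟨hx0, by nlinarith, ?_, mul_le_mul_of_nonneg_left hw hx0, by nlinarith, ?_, ?_⟩
  · linarith [mul_le_mul_of_nonneg_left hwB hx0, show x * (η * B) = η by linear_combination η * hx]
  · linarith [mul_le_mul_of_nonneg_left hm hx0, show x * (m * B) = m by linear_combination m * hx]
  · intro t ht0 ht1 htr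
    linarith [mul_le_mul_of_nonneg_left (hm' t ht0 ht1 htr) hx0,
      show x * (m * (B + t)) = m * (1 + x * t) by linear_combination m * hx]

namespace BoundConstants

theorem phi_mul_r_sub_half_le (h : BoundConstants r s X θ η φ m) : φ * (r - 1 / 2) ≤ 1 := by
  rcases h.r_eq_two_or_phi_mul with h2 | hφ
  · rw [h2]
    linarith [h.phi_le]
  · nlinarith [h.phi_pos, h.phi_le, h.r_le_X]

theorem phi_mul_s_sub_phi_le (h : BoundConstants r s X θ η φ m) : φ * (s - φ) ≤ 3 / 2 := by
  rcases h.r_eq_two_or_phi_mul with h2 | hφ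
  · obtain ⟨hs, -, hφ⟩ := h.eq_of_r_eq_two h2
    rw [hs, hφ]
    norm_num
  · nlinarith [h.phi_pos, h.phi_le, h.s_le_X_add_one]

theorem futureState_phi_zero (h : BoundConstants r s X θ η φ m) : FutureState r s X θ φ φ 0 := by
  refine ⟨h.phi_pos, h.phi_le, h.phi_mul_r_sub_half_le, le_rfl, h.phi_pos.le, by linarith,
    by linarith, ?_⟩
  have hB : 0 ≤ X + θ - 4 := by linarith [h.four_le_X, h.theta_pos]
  nlinarith [h.phi_mul_s_sub_phi_le, h.three_le_s, h.phi_le, h.phi_pos]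

theorem m_mul_s_add_theta_sub_le (h : BoundConstants r s X θ η φ m) {t z : ℝ}
    (hf : FutureState r s X θ φ t z) : m * (s + θ - t) ≤ (s + θ - 2 - η) * (1 - t + z) := by
  have hs := h.three_le_s
  have hθ := h.theta_pos
  refine le_of_mul_le_mul_left (a := s + θ - φ) ?_ (by linarith [h.phi_le])
  calc (s + θ - φ) * (m * (s + θ - t)) = (m * (s + θ - φ)) * (s + θ - t) := by ring
    _ ≤ ((s + θ - 2 - η) * (1 - φ)) * (s + θ - t) :=
        mul_le_mul_of_nonneg_right h.m_mul_s_add_theta_sub_phi_le (by linarith [hf.t_le_half])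
    _ = (s + θ - 2 - η) * ((1 - φ) * (s + θ - t)) := by ring
    _ ≤ (s + θ - 2 - η) * ((1 - t + z) * (s + θ - φ)) :=
        mul_le_mul_of_nonneg_left hf.phi_mul_le (by linarith [h.eta_le])
    _ = (s + θ - φ) * ((s + θ - 2 - η) * (1 - t + z)) := by ring

theorem m_mul_sub_le_of_le (h : BoundConstants r s X θ η φ m) {t z B w : ℝ}
    (hf : FutureState r s X θ φ t z) (hB : 1 ≤ B)
    (hle : 0 ≤ (B - s - θ) * (2 + η - t) + (1 + η - w) * (s + θ - t)) :
    m * (B - t) ≤ (B - 1 - w) * (1 - t + z) := by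
  have ht := hf.t_le_half
  refine le_of_mul_le_mul_left (a := s + θ - t) ?_ (by linarith [h.three_le_s, h.theta_pos])
  calc (s + θ - t) * (m * (B - t)) = (m * (s + θ - t)) * (B - t) := by ring
    _ ≤ ((s + θ - 2 - η) * (1 - t + z)) * (B - t) :=
        mul_le_mul_of_nonneg_right (h.m_mul_s_add_theta_sub_le hf) (by linarith)
    _ = ((s + θ - 2 - η) * (B - t)) * (1 - t + z) := by ring
    _ ≤ ((B - 1 - w) * (s + θ - t)) * (1 - t + z) :=
        mul_le_mul_of_nonneg_right (by linarith) hf.pos.le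
    _ = (s + θ - t) * ((B - 1 - w) * (1 - t + z)) := by ring

theorem m_mul_add_le_of_five_le_r (h : BoundConstants r s X θ η φ m) (h5 : 5 ≤ r) {B w t : ℝ}
    (hB : r - 1 / 4 ≤ B) (hw : -η ≤ w) (ht : t * (r - 1 / 2) ≤ 1) :
    m * (B + t) ≤ B - 1 + w := by
  have hη := h.eta_le_of_five_le_s (h.five_le_s (by linarith))
  have hs := h.three_le_s
  have hmt : m * t ≤ 0.2223 := by
    nlinarith [h.m_le_one, h.m_pos, show t ≤ 0.2223 by nlinarith]
  have hsB : 1.4609 * s ≤ 2 * B := by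
    obtain hsr | hr := h.s_eq_r_or_six_le_r h5
    · linarith
    · linarith [h.s_le_r_add_one]
  have hmB : s * 1.4609 ≤ s * ((1 - m) * B) := by
    nlinarith [h.m_mul_s_le]
  linarith [le_of_mul_le_mul_left hmB (by linarith)]

theorem m_mul_add_le (h : BoundConstants r s X θ η φ m) {B w t : ℝ} (hB : 5 / 2 ≤ B)
    (hB4 : 4 ≤ r → 3.73 ≤ B) (hB5 : 5 ≤ r → r - 1 / 4 ≤ B) (hw : -η ≤ w) (ht1 : t ≤ 1 / 2)
    (htr : t * (r - 1 / 2) ≤ 1) : m * (B + t) ≤ B - 1 + w := by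
  have hη := h.eta_le
  have hm := h.m_pos
  obtain h3 | h4 | h5 := h.s_eq_three_or_r_eq_four_or_five_le_r
  · nlinarith [h.m_le_of_s_eq_three h3]
  · nlinarith [h.m_le_of_r_eq_four h4, hB4 h4.ge]
  · exact h.m_mul_add_le_of_five_le_r h5 (hB5 h5) hw htr

theorem strongPastState_of_mul_eq_one (h : BoundConstants r s X θ η φ m) {x B w : ℝ}
    (hx : x * B = 1) (hB : 5 / 2 ≤ B) (hB4 : 4 ≤ r → 3.73 ≤ B) (hB5 : 5 ≤ r → r - 1 / 4 ≤ B)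
    (hwB : w ≤ η * B) (hw : w ≤ 1 + η) (hw' : -η ≤ w) (hηw : η - w ≤ θ * B)
    (hedge : ∀ t, 0 ≤ t → t ≤ 1 / 2 →
      0 ≤ (B - X - θ) * (1 + η - t) + (η + w) * (X + θ - t))
    (hfuture : ∀ t z, FutureState r s X θ φ t z → m * (B - t) ≤ (B - 1 - w) * (1 - t + z)) :
    StrongPastState r s X θ η φ m x (x * w) := by
  have hm : m * B ≤ B - 1 - w := by
    have hφ := hfuture φ 0 h.futureState_phi_zero
    refine le_of_mul_le_mul_right (a := 1 - φ) ?_ (by linarith [h.phi_le])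
    nlinarith [mul_nonneg h.m_pos.le (mul_nonneg h.phi_pos.le (by linarith : 0 ≤ B - 1))]
  have hpast : PastState r η m x (x * w) :=
    .of_mul_eq_one h.eta_pos.le hx (by linarith) hwB hw hw' hm
      fun _ _ ht1 htr => h.m_mul_add_le hB hB4 hB5 hw' ht1 htr
  have hx0 := hpast.x_nonneg
  refine ⟨hpast, by nlinarith, fun h4 => by nlinarith [hB4 h4], fun h5 => by nlinarith [hB5 h5],
    ?_, fun t ht0 ht1 => ?_, fun t z hf => ?_⟩
  · linarith [mul_le_mul_of_nonneg_left hηw hx0, show x * (θ * B) = θ by linear_combination θ * hx]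
  · have hle := mul_nonneg hx0 (hedge t ht0 ht1)
    linear_combination hle + (1 + η - t) * hx
  · have hle := mul_le_mul_of_nonneg_left (hfuture t z hf) hx0
    linear_combination hle - (m - (1 - t + z)) * hx

theorem strongPastState_zero (h : BoundConstants r s X θ η φ m) :
    StrongPastState r s X θ η φ m 0 0 := by
  have hη := h.eta_pos
  have hm := h.m_le_one
  refine ⟨⟨le_rfl, by norm_num, hη.le, by linarith, by linarith, by linarith, ?_⟩, by norm_num,
    by norm_num, by norm_num, by linarith [h.theta_pos], ?_, fun t z hf => ?_⟩
  · intros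
    linarith
  · intros
    linarith
  · have ht : 0 < s + θ - t := by linarith [h.three_le_s, h.theta_pos, hf.t_le_half]
    have hle : (s + θ - t) * m ≤ (s + θ - t) * (1 - t + z) := by
      nlinarith [h.m_mul_s_add_theta_sub_le hf, hf.pos, hf.t_le_half]
    linarith [le_of_mul_le_mul_left hle ht]

end BoundConstants

end States

section Transitions

variable {r s X θ η φ m x x' y a : ℝ}

namespace BoundConstants

theorem one_add_eta_mul_sub_le (h : BoundConstants r s X θ η φ m) (hp : PastState r η m x y) :
    (1 + η) * (θ - x) ≤ η - y := by
  linarith [hp.y_le_mul, show (1 + η) * θ = η by linear_combination -h.eta_mul]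

theorem nonneg_of_add_le (h : BoundConstants r s X θ η φ m) (hp : PastState r η m x y)
    {B K u v : ℝ} (hB : K + x ≤ B) (hu : 0 ≤ u) (hv : 0 ≤ v) (huv : u ≤ (1 + η) * v) :
    0 ≤ (B - K - θ) * u + (η - y) * v := by
  have hBu : (x - θ) * u ≤ (B - K - θ) * u := mul_le_mul_of_nonneg_right (by linarith) hu
  rcases le_or_gt θ x with hx | hx
  · linarith [mul_nonneg (sub_nonneg.2 hx) hu, mul_nonneg (sub_nonneg.2 hp.y_le_eta) hv]
  · linarith [mul_le_mul_of_nonneg_right (h.one_add_eta_mul_sub_le hp) hv,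
      mul_le_mul_of_nonneg_left huv (sub_nonneg.2 hx.le)]

theorem nonneg_of_add_le_add_one (h : BoundConstants r s X θ η φ m) (hp : PastState r η m x y)
    {B K u v : ℝ} (hB : K + x ≤ B + 1) (hu : 0 ≤ u) (huv : u ≤ v) :
    0 ≤ (B - K - θ) * u + (1 + η + y) * v := by
  have hθη := h.theta_le_eta
  have hx : 0 ≤ 1 + θ - x := by linarith [h.theta_pos, hp.x_le]
  have hy : 1 + θ - x ≤ 1 + η + y := by
    nlinarith [hp.neg_mul_le_y, mul_nonneg hp.x_nonneg (by linarith [h.eta_le] : 0 ≤ 1 - η)]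
  linarith [mul_le_mul_of_nonneg_right (by linarith : -(1 + θ - x) ≤ B - K - θ) hu,
    mul_le_mul_of_nonneg_left huv hx, mul_le_mul_of_nonneg_right hy (hu.trans huv)]

theorem strongPastState_even_add (h : BoundConstants r s X θ η φ m) (hp : PastState r η m x y)
    (ha : X ≤ a) (hx : x' * (a + x) = 1) : StrongPastState r s X θ η φ m x' (x' * -y) := by
  have hX := h.four_le_X
  have hη := h.eta_le
  have hη0 := h.eta_pos
  have hθ := h.theta_le
  have hθ0 := h.theta_pos
  have hrX := h.r_le_X
  have hx0 := hp.x_nonneg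
  have hyη := hp.y_le_eta
  have hyl := hp.neg_eta_le_y hη0
  refine h.strongPastState_of_mul_eq_one hx (by linarith) (by intro; linarith)
    (by intro; linarith) (by nlinarith) (by linarith) (by linarith) ?_ ?_ ?_
  · have hη' : η * (1 - θ) = θ := h.eta_mul
    nlinarith
  · intro t ht0 ht1
    rw [← sub_eq_add_neg]
    exact h.nonneg_of_add_le hp (by linarith) (by linarith) (by linarith) (by nlinarith)
  · intro t z hf
    have ht := hf.t_le_half
    refine h.m_mul_sub_le_of_le hf (by linarith) ?_
    rw [sub_neg_eq_add]
    exact h.nonneg_of_add_le_add_one hp (by linarith [h.s_le_X_add_one]) (by linarith)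
      (by linarith [h.three_le_s])

theorem edge_of_even_sub (h : BoundConstants r s X θ η φ m) (hp : StrongPastState r s X θ η φ m x y)
    (ha : X ≤ a) {t : ℝ} (ht0 : 0 ≤ t) (ht1 : t ≤ 1 / 2) :
    0 ≤ (a - x - X - θ) * (1 + η - t) + (η + y) * (X + θ - t) := by
  have hX := h.four_le_X
  have hη0 := h.eta_pos
  have hη := h.eta_le
  have hθ0 := h.theta_pos
  have hx0 := hp.x_nonneg
  have hηs := h.eta_mul_s_add_theta
  have hηx := hp.eta_mul_sub_le
  have hη' := h.eta_mul
  have hxθ : -(x + θ) * (1 + η - t) ≤ (a - x - X - θ) * (1 + η - t) :=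
    mul_le_mul_of_nonneg_right (by linarith) (by linarith)
  rcases h.X_eq_s_add_one_or_eq_s_sub_one with hXs | ⟨hXs, h4⟩
  · have hηy : η * (x + θ) * (X + θ - t) ≤ (η + y) * (X + θ - t) :=
      mul_le_mul_of_nonneg_right (by nlinarith [hp.neg_mul_le_y]) (by linarith)
    have hηX : 0 ≤ (x + θ) * (η * (X + θ - t) - (1 + η - t)) :=
      mul_nonneg (by linarith) (by rw [hXs]; nlinarith)
    linarith
  · have hθ := h.theta_le_of_five_le_s (h.five_le_s h4)
    have hη5 := h.eta_le_of_five_le_s (h.five_le_s h4)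
    have hx := hp.x_le_of_four_le h4
    have hηX : η * (X + θ) = 1 := by rw [hXs]; linarith
    have hηy : (1 - x) * (1 - η * t) ≤ (η + y) * (X + θ - t) :=
      calc (1 - x) * (1 - η * t) = η * (1 - x) * (X + θ - t) := by
            linear_combination -(1 - x) * hηX
        _ ≤ (η + y) * (X + θ - t) :=
            mul_le_mul_of_nonneg_right (by linarith [hp.neg_mul_le_y]) (by linarith)
    have hlow : 0.73 * 0.88 ≤ (1 - x) * (1 - η * t) := by
      apply mul_le_mul <;> nlinarith
    have hup : (x + θ) * (1 + η - t) ≤ 0.4627 * 1.2386 := by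
      apply mul_le_mul <;> linarith
    linarith

theorem future_of_even_sub (h : BoundConstants r s X θ η φ m)
    (hp : StrongPastState r s X θ η φ m x y) (ha : X ≤ a) {t : ℝ} (ht0 : 0 ≤ t) (ht1 : t ≤ 1 / 2) :
    0 ≤ (a - x - s - θ) * (2 + η - t) + (1 + η - y) * (s + θ - t) := by
  have hη0 := h.eta_pos
  have hθ0 := h.theta_pos
  have hθ := h.theta_le
  have hs := h.three_le_s
  have hx := hp.x_le_two_fifths
  have hy : 1 * (s + θ - t) ≤ (1 + η - y) * (s + θ - t) :=
    mul_le_mul_of_nonneg_right (by linarith [hp.y_le_eta]) (by linarith)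
  rcases h.X_eq_s_add_one_or_eq_s_sub_one with hXs | ⟨hXs, h4⟩
  · linarith [mul_nonneg (by linarith : 0 ≤ a - x - s - θ) (by linarith : 0 ≤ 2 + η - t)]
  · have hs5 := h.five_le_s h4
    have hx4 := hp.x_le_of_four_le h4
    have hlow : -(1 + x + θ) * (2 + η - t) ≤ (a - x - s - θ) * (2 + η - t) :=
      mul_le_mul_of_nonneg_right (by linarith) (by linarith)
    have hup : (1 + x + θ) * (2 + η - t) ≤ 1.4627 * 2.2386 :=
      mul_le_mul (by linarith [h.theta_le_of_five_le_s hs5])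
        (by linarith [h.eta_le_of_five_le_s hs5]) (by linarith) (by norm_num)
    linarith

theorem strongPastState_even_sub (h : BoundConstants r s X θ η φ m)
    (hp : StrongPastState r s X θ η φ m x y) (ha : X ≤ a) (hx : x' * (a - x) = 1) :
    StrongPastState r s X θ η φ m x' (x' * y) := by
  have hX := h.four_le_X
  have hη := h.eta_le
  have hη0 := h.eta_pos
  have hrX := h.r_le_X
  have hx1 := hp.x_le_two_fifths
  have hyη := hp.y_le_eta
  have hyl := hp.neg_eta_le_y hη0
  refine h.strongPastState_of_mul_eq_one hx (by linarith)
    (fun h4 => by linarith [hp.x_le_of_four_le h4])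
    (fun h5 => by nlinarith [hp.x_mul_le_of_five_le h5]) (by nlinarith) (by linarith)
    (by linarith) ?_ (fun t => h.edge_of_even_sub hp ha) fun t z hf => ?_
  · have hη' : η * (1 - θ) = θ := h.eta_mul
    nlinarith [h.theta_le, h.theta_pos]
  · exact h.m_mul_sub_le_of_le hf (by linarith)
      (h.future_of_even_sub hp ha hf.t_pos.le hf.t_le_half)

theorem strongPastState_odd_add (h : BoundConstants r s X θ η φ m) (hp : PastState r η m x y)
    (ha : s ≤ a) (hx : x' * (a + x) = 1) : StrongPastState r s X θ η φ m x' (x' * (1 + y)) := by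
  have hs := h.three_le_s
  have hη := h.eta_le
  have hη0 := h.eta_pos
  have hθ := h.theta_le
  have hθ0 := h.theta_pos
  have hrs := h.r_le_s
  have hx0 := hp.x_nonneg
  have hyη := hp.y_le_eta
  have hyl := hp.neg_eta_le_y hη0
  refine h.strongPastState_of_mul_eq_one hx (by linarith)
    (fun h4 => by linarith [h.five_le_s h4]) (by intro; linarith) ?_ (by linarith) (by linarith)
    (by nlinarith) ?_ ?_
  · have hy : y ≤ θ + η * x := by
      linarith [mul_le_mul_of_nonneg_left hp.y_le_mul hθ0.le,
        mul_le_mul_of_nonneg_left hyη (by linarith : 0 ≤ 1 - θ), h.eta_mul,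
        show θ * (x * (1 + η)) = η * x by linear_combination -x * h.eta_mul]
    linarith [mul_le_mul_of_nonneg_left ha hη0.le, h.eta_mul_s]
  · intro t _ ht1
    rw [show η + (1 + y) = 1 + η + y by ring]
    exact h.nonneg_of_add_le_add_one hp (by linarith [h.X_le_s_add_one]) (by linarith)
      (by linarith [h.four_le_X])
  · intro t z hf
    have ht := hf.t_le_half
    have ht0 := hf.t_pos.le
    refine h.m_mul_sub_le_of_le hf (by linarith) ?_
    rw [show 1 + η - (1 + y) = η - y by ring]
    exact h.nonneg_of_add_le hp (by linarith) (by linarith) (by linarith) (by nlinarith)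

theorem edge_of_odd_sub (h : BoundConstants r s X θ η φ m) (hp : StrongPastState r s X θ η φ m x y)
    (ha : s ≤ a) {t : ℝ} (ht0 : 0 ≤ t) (ht1 : t ≤ 1 / 2) :
    0 ≤ (a - x - X - θ) * (1 + η - t) + (1 + η - y) * (X + θ - t) := by
  have hX := h.four_le_X
  have hη0 := h.eta_pos
  have hθ0 := h.theta_pos
  have hlow : -(1 + x + θ) * (1 + η - t) ≤ (a - x - X - θ) * (1 + η - t) :=
    mul_le_mul_of_nonneg_right (by linarith [h.X_le_s_add_one]) (by linarith)
  have hy : 1 * (X + θ - t) ≤ (1 + η - y) * (X + θ - t) :=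
    mul_le_mul_of_nonneg_right (by linarith [hp.y_le_eta]) (by linarith)
  have hup : (1 + x + θ) * (1 + η - t) ≤ 1.703 * 1.4344 :=
    mul_le_mul (by linarith [hp.x_le_two_fifths, h.theta_le]) (by linarith [h.eta_le])
      (by linarith) (by norm_num)
  linarith

theorem m_mul_sub_one_le (h : BoundConstants r s X θ η φ m) (h3 : s = 3) {t z : ℝ}
    (hf : FutureState r s X θ φ t z) :
    m * ((X + θ) * (3 - t) - 1) ≤ (X + θ - 1 - η) * (1 - t + z) := by
  have hD := h.five_lt_denom
  have hm := h.m_mul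
  have hX := h.four_le_X
  have hθ := h.theta_pos
  rw [h3] at hD hm
  have hlin : (1 - φ) * ((X + θ) * (3 - t) - 1) ≤ (1 - t + z) * ((3 - φ) * (X + θ) - 1) := by
    have hφ : 0 ≤ (φ + z - t) * (2 * (X + θ) - 1) :=
      mul_nonneg (by linarith [hf.t_le_phi_add]) (by linarith)
    have hz : 0 ≤ z * ((1 - φ) * (X + θ)) :=
      mul_nonneg hf.z_nonneg (mul_nonneg (by linarith [h.phi_le]) (by linarith))
    linarith
  refine le_of_mul_le_mul_left (a := (3 - φ) * (X + θ) - 1) ?_ (by linarith)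
  calc ((3 - φ) * (X + θ) - 1) * (m * ((X + θ) * (3 - t) - 1))
      = (X + θ - 1 - η) * ((1 - φ) * ((X + θ) * (3 - t) - 1)) := by
        linear_combination ((X + θ) * (3 - t) - 1) * hm
    _ ≤ (X + θ - 1 - η) * ((1 - t + z) * ((3 - φ) * (X + θ) - 1)) :=
        mul_le_mul_of_nonneg_left hlin h.factor_pos.le
    _ = ((3 - φ) * (X + θ) - 1) * ((X + θ - 1 - η) * (1 - t + z)) := by ring

theorem future_of_odd_sub_of_s_eq_three (h : BoundConstants r s X θ η φ m) (h3 : s = 3)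
    (hp : StrongPastState r s X θ η φ m x y) {t z : ℝ} (hf : FutureState r s X θ φ t z) :
    m * (3 - x - t) ≤ (1 - x + y) * (1 - t + z) := by
  have ht := hf.t_le_half
  have hX := h.four_le_X
  have hθ := h.theta_pos
  have hq : 1 / (3 - t) * (3 - t) = 1 := one_div_mul_cancel (by linarith)
  -- the edge inequality at `1 / (3 - t)`, the continuation of the past by the digit `3`
  have hedge : (X + θ - 1 - η) * (3 - t - x) ≤ (1 - x + y) * ((X + θ) * (3 - t) - 1) := by
    have hle := mul_le_mul_of_nonneg_right (hp.edge_le (1 / (3 - t))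
      (one_div_nonneg.2 (by linarith)) (by rw [div_le_iff₀] <;> linarith))
      (by linarith : 0 ≤ 3 - t)
    linear_combination hle - ((1 - x + y) - x * (X + θ - 1 - η)) * hq
  have hpos : 0 < (X + θ) * (3 - t) - 1 := by nlinarith
  refine le_of_mul_le_mul_left (a := (X + θ) * (3 - t) - 1) ?_ hpos
  linarith [mul_le_mul_of_nonneg_right hedge hf.pos.le,
    mul_le_mul_of_nonneg_right (h.m_mul_sub_one_le h3 hf)
      (by linarith [hp.x_le] : 0 ≤ 3 - t - x)]

theorem future_of_odd_sub_of_r_eq_four (h : BoundConstants r s X θ η φ m) (h4 : r = 4)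
    (hp : StrongPastState r s X θ η φ m x y) {t z : ℝ} (hf : FutureState r s X θ φ t z) :
    m * (5 - x - t) ≤ (3 - x + y) * (1 - t + z) := by
  obtain ⟨hs, -⟩ := h.eq_of_r_eq_four h4
  obtain ⟨hφ, hφ'⟩ := h.phi_bounds_of_r_eq_four h4
  have hη := h.eta_le_of_five_le_s hs.ge
  have hθ' := h.theta_le_of_five_le_s hs.ge
  have hθ : 0.192 ≤ θ := h.le_theta_of_le_one (by rw [hs]; norm_num)
  have hx := hp.x_le_of_four_le h4.ge
  have hx0 := hp.x_nonneg
  have ht := hf.t_le_half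
  have ht0 := hf.t_pos.le
  have hφt := hf.phi_mul_le
  have hz := hf.pos
  rw [hs] at hφt
  have hfut : 0.1486 * (5.192 - t) ≤ 1 - t + z := by
    have hlow : 0.732 * (5.192 - t) ≤ (1 - φ) * (5 + θ - t) := by
      apply mul_le_mul <;> linarith
    linarith [mul_le_mul_of_nonneg_left (by linarith : 5 + θ - φ ≤ 4.9249) hz.le]
  calc m * (5 - x - t) ≤ 0.43 * (5 - x - t) :=
        mul_le_mul_of_nonneg_right (h.m_le_of_r_eq_four h4) (by linarith)
    _ ≤ (3 - 1.2386 * x) * (0.1486 * (5.192 - t)) := by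
        nlinarith [mul_nonneg (sub_nonneg.2 hx) ht0]
    _ ≤ (3 - x + y) * (1 - t + z) :=
        mul_le_mul (by nlinarith [hp.neg_mul_le_y]) hfut (by linarith)
          (by linarith [hp.neg_eta_le_y h.eta_pos])

theorem future_of_odd_sub_of_five_le_r (h : BoundConstants r s X θ η φ m) (h5 : 5 ≤ r)
    (hp : StrongPastState r s X θ η φ m x y) {t : ℝ} (ht0 : 0 ≤ t) (ht1 : t ≤ 1 / 2) :
    0 ≤ -(x + θ) * (2 + η - t) + (η + y) * (s + θ - t) := by
  have hrs := h.r_le_s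
  have hθ := h.theta_le_of_five_le_s (by linarith)
  have hη := h.eta_le_of_five_le_s (by linarith)
  have hη0 := h.eta_pos
  have hθ0 := h.theta_pos
  have hx0 := hp.x_nonneg
  have hx5 := hp.x_mul_le_of_five_le h5
  have hηy : (1 - x) * (1 + η - η * t) ≤ (η + y) * (s + θ - t) :=
    calc (1 - x) * (1 + η - η * t) = η * (1 - x) * (s + θ - t) := by
          linear_combination -(1 - x) * h.eta_mul_s_add_theta
      _ ≤ (η + y) * (s + θ - t) :=
          mul_le_mul_of_nonneg_right (by linarith [hp.neg_mul_le_y]) (by linarith)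
  rcases le_or_gt s 6 with h6 | h6
  · have hx : x ≤ 0.2106 := by nlinarith
    have hη6 : 1 / 6 ≤ η := by nlinarith [h.eta_mul_s]
    have hup : (x + θ) * (2 + η - t) ≤ 0.4033 * (2.2386 - t) := by
      apply mul_le_mul <;> linarith
    have hlow : 0.7894 * (1.1666 - t / 6) ≤ (1 - x) * (1 + η - η * t) :=
      mul_le_mul (by linarith)
        (by linarith [mul_le_mul_of_nonneg_right hη6 (by linarith : 0 ≤ 1 - t)])
        (by linarith) (by linarith)
    linarith
  · have hr : 6 ≤ r := by
      rcases h.s_eq_r_or_six_le_r h5 with hsr | hr <;> linarith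
    have hx : x ≤ 0.174 := by nlinarith
    have hθ6 : θ ≤ 1 / 6 := by nlinarith [h.theta_mul_s_le_one]
    have hup : (x + θ) * (2 + η - t) ≤ 0.341 * 2.2386 := by
      apply mul_le_mul <;> linarith
    have hlow : 0.826 * 1 ≤ (1 - x) * (1 + η - η * t) := by
      apply mul_le_mul <;> nlinarith
    linarith

theorem future_of_odd_sub (h : BoundConstants r s X θ η φ m)
    (hp : StrongPastState r s X θ η φ m x y) (ha : a = s ∨ s + 2 ≤ a) {t z : ℝ}
    (hf : FutureState r s X θ φ t z) :
    m * (a - x - t) ≤ (a - x - 1 - (1 - y)) * (1 - t + z) := by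
  have hs := h.three_le_s
  have hη0 := h.eta_pos
  have hx := hp.x_le_two_fifths
  have ht := hf.t_le_half
  have ht0 := hf.t_pos.le
  rcases ha with rfl | ha
  · rcases h.s_eq_three_or_r_eq_four_or_five_le_r with h3 | h4 | h5
    · have hle := h.future_of_odd_sub_of_s_eq_three h3 hp hf
      rw [h3]
      linarith
    · have hle := h.future_of_odd_sub_of_r_eq_four h4 hp hf
      rw [(h.eq_of_r_eq_four h4).1]
      linarith
    · exact h.m_mul_sub_le_of_le hf (by linarith)
        (by linarith [h.future_of_odd_sub_of_five_le_r h5 hp ht0 ht])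
  · refine h.m_mul_sub_le_of_le hf (by linarith) ?_
    linarith [mul_nonneg (by linarith [h.theta_le] : 0 ≤ a - x - s - θ)
      (by linarith : 0 ≤ 2 + η - t), mul_nonneg (by linarith [hp.neg_eta_le_y hη0] : 0 ≤ η + y)
      (by linarith [h.theta_pos] : 0 ≤ s + θ - t)]

theorem strongPastState_odd_sub (h : BoundConstants r s X θ η φ m)
    (hp : StrongPastState r s X θ η φ m x y) (ha : a = s ∨ s + 2 ≤ a) (hx : x' * (a - x) = 1) :
    StrongPastState r s X θ η φ m x' (x' * (1 - y)) := by
  have hs := h.three_le_s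
  have hη := h.eta_le
  have hη0 := h.eta_pos
  have hθ0 := h.theta_pos
  have hrs := h.r_le_s
  have hsa : s ≤ a := by rcases ha with ha | ha <;> linarith
  have hx1 := hp.x_le_two_fifths
  have hyη := hp.y_le_eta
  have hyl := hp.neg_eta_le_y hη0
  refine h.strongPastState_of_mul_eq_one hx (by linarith)
    (fun h4 => by linarith [h.five_le_s h4])
    (fun h5 => by nlinarith [hp.x_mul_le_of_five_le h5, hp.x_nonneg]) ?_ (by linarith)
    (by linarith) ?_ ?_ fun t z hf => h.future_of_odd_sub hp ha hf
  · linarith [mul_le_mul_of_nonneg_left hsa hη0.le, h.eta_mul_s, hp.eta_mul_sub_le]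
  · linarith [mul_nonneg hθ0.le (by linarith : 0 ≤ a - x)]
  · intro t ht0 ht1
    linarith [h.edge_of_odd_sub hp hsa ht0 ht1]

theorem pastState_two_add (h : BoundConstants r s X θ η φ m) (h2 : r = 2)
    (hp : PastState r η m x y) (hx : x' * (2 + x) = 1) : PastState r η m x' (x' * -y) := by
  have hm := h.m_le_of_r_eq_two h2
  have hm0 := h.m_pos
  have hη := h.eta_le
  have hη0 := h.eta_pos
  have hx0 := hp.x_nonneg
  have hyη := hp.y_le_eta
  have hyl := hp.neg_eta_le_y hη0
  refine .of_mul_eq_one hη0.le hx (by linarith) (by nlinarith) (by linarith) (by linarith)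
    (by nlinarith) fun t ht0 ht1 _ => ?_
  linarith [mul_le_mul_of_nonneg_right hm (by linarith : 0 ≤ 2 + x + t)]

theorem pastState_two_sub (h : BoundConstants r s X θ η φ m) (h2 : r = 2)
    (hp : StrongPastState r s X θ η φ m x y) (hx : x' * (2 - x) = 1) :
    PastState r η m x' (x' * y) := by
  have hm := h.m_le_of_r_eq_two h2
  have hη := h.eta_le
  have hη0 := h.eta_pos
  have hx1 := hp.x_le_two_fifths
  have hyη := hp.y_le_eta
  have hyl := hp.neg_eta_le_y hη0
  refine .of_mul_eq_one hη0.le hx (by linarith) (by nlinarith) (by linarith) hyl ?_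
    fun t ht0 ht1 _ => ?_
  · have hφ := hp.m_mul_le_of_future φ 0 h.futureState_phi_zero
    rw [(h.eq_of_r_eq_two h2).2.2] at hφ
    linarith
  · nlinarith [mul_le_mul_of_nonneg_right hm (by linarith : 0 ≤ 2 - x + t), hp.neg_mul_le_y]

end BoundConstants

end Transitions

section Corners

/-- A past state together with the sign `ε` of the next partial quotient; only a strong past state
may precede `ε = -1`. -/
structure SignedPastState (r s X θ η φ m ε x y : ℝ) : Prop extends PastState r η m x y where
  sign : ε = 1 ∨ ε = -1 ∧ StrongPastState r s X θ η φ m x y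

variable {r s X θ η φ m x y t z : ℝ}

namespace BoundConstants

theorem mul_s_le_two (h : BoundConstants r s X θ η φ m) (ht : 0 ≤ t) (htr : t * (r - 1 / 2) ≤ 1) :
    t * s ≤ 2 := by
  nlinarith [h.s_le_r_add_one, h.two_le_r]

theorem m_le_one_sub (h : BoundConstants r s X θ η φ m) (hf : FutureState r s X θ φ t z) :
    m ≤ 1 - t := by
  nlinarith [h.m_mul_s_le, h.mul_s_le_two hf.t_pos.le hf.t_mul_le, h.three_le_s]

theorem one_add_theta_sub_eta_mul_le (h : BoundConstants r s X θ η φ m) (hp : PastState r η m x y)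
    (ht : 0 ≤ t) (ht' : t ≤ 1 / 2) :
    (1 + θ - η) * (1 + x * t) ≤ (1 + x - y) * (1 + θ * t) := by
  have hη := h.eta_pos
  have hθt : 0 ≤ 1 + θ * t := by nlinarith [h.theta_pos]
  rcases le_or_gt θ x with hθx | hxθ
  · have hy : (1 + x - η) * (1 + θ * t) ≤ (1 + x - y) * (1 + θ * t) :=
      mul_le_mul_of_nonneg_right (by linarith [hp.y_le_eta]) hθt
    have hdiff : 0 ≤ (x - θ) * (1 - t * (1 - η)) :=
      mul_nonneg (by linarith) (by nlinarith)
    linarith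
  · have hy : (1 - x * η) * (1 + θ * t) ≤ (1 + x - y) * (1 + θ * t) :=
      mul_le_mul_of_nonneg_right (by linarith [hp.y_le_mul]) hθt
    have hdiff : 0 ≤ (θ - x) * (η + t) := mul_nonneg (by linarith) (by linarith)
    linear_combination hy + hdiff - (1 + x * t) * h.eta_mul

theorem factor_mul_le (h : BoundConstants r s X θ η φ m) (ht : 0 ≤ t) (ht' : t ≤ 1 / 2) :
    (X + θ - 1 - η) * (1 + θ * t) ≤ (1 + θ - η) * (X + θ - t) := by
  have hη := h.eta_le
  have hθX : θ * (X + θ) ≤ 1 + θ := by nlinarith [h.X_le_s_add_one, h.theta_mul, h.theta_pos]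
  have hfst : 0 ≤ (1 + θ - η) * (1 - 2 * t) :=
    mul_nonneg (by linarith [h.theta_pos]) (by linarith)
  have hsnd : 0 ≤ (η + t) * (1 + θ - θ * (X + θ)) :=
    mul_nonneg (by linarith [h.eta_pos]) (by linarith)
  linear_combination hfst + hsnd - (1 - t - (X + θ)) * h.eta_mul

theorem m_mul_le_outer (h : BoundConstants r s X θ η φ m) (hf : FutureState r s X θ φ t z)
    {b c : ℝ} (hc : 0 ≤ c) (hbc : (X + θ - 1 - η) * b ≤ c * (X + θ - t)) :
    m * b ≤ c * (1 - t - z) := by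
  have hs : 0 < s - φ - 2 := by linarith [h.three_le_s, h.phi_le]
  have hden := h.five_lt_denom
  refine le_of_mul_le_mul_left (a := (s - φ) * (X + θ) - 1) ?_ (by linarith)
  calc ((s - φ) * (X + θ) - 1) * (m * b)
      = ((X + θ - 1 - η) * b) * (s - φ - 2) := by linear_combination b * h.m_mul
    _ ≤ (c * (X + θ - t)) * (s - φ - 2) := mul_le_mul_of_nonneg_right hbc hs.le
    _ = c * ((s - φ - 2) * (X + θ - t)) := by ring
    _ ≤ c * ((1 - t - z) * ((s - φ) * (X + θ) - 1)) := mul_le_mul_of_nonneg_left hf.edge_le hc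
    _ = ((s - φ) * (X + θ) - 1) * (c * (1 - t - z)) := by ring

theorem m_mul_le_corner_add (h : BoundConstants r s X θ η φ m) (hp : PastState r η m x y)
    (hf : FutureState r s X θ φ t z) : m * (1 + x * t) ≤ (1 + x - y) * (1 - t - z) := by
  have ht := hf.t_pos
  have ht' := hf.t_le_half
  refine h.m_mul_le_outer hf (by linarith [hp.y_le_eta, h.eta_le, hp.x_nonneg]) ?_
  have hθt : 0 < 1 + θ * t := by nlinarith [h.theta_pos]
  refine le_of_mul_le_mul_left (a := 1 + θ * t) ?_ hθt
  calc (1 + θ * t) * ((X + θ - 1 - η) * (1 + x * t))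
      = ((X + θ - 1 - η) * (1 + θ * t)) * (1 + x * t) := by ring
    _ ≤ ((1 + θ - η) * (X + θ - t)) * (1 + x * t) :=
        mul_le_mul_of_nonneg_right (h.factor_mul_le ht.le ht') (by nlinarith [hp.x_nonneg])
    _ = ((1 + θ - η) * (1 + x * t)) * (X + θ - t) := by ring
    _ ≤ ((1 + x - y) * (1 + θ * t)) * (X + θ - t) :=
        mul_le_mul_of_nonneg_right (h.one_add_theta_sub_eta_mul_le hp ht.le ht')
          (by linarith [h.four_le_X, h.theta_pos])
    _ = (1 + θ * t) * ((1 + x - y) * (X + θ - t)) := by ring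

theorem m_mul_le_corner_sub (h : BoundConstants r s X θ η φ m)
    (hp : StrongPastState r s X θ η φ m x y) (hf : FutureState r s X θ φ t z) :
    m * (1 - x * t) ≤ (1 - x + y) * (1 - t - z) :=
  h.m_mul_le_outer hf
    (by linarith [hp.neg_eta_le_y h.eta_pos, h.eta_le, hp.x_le_two_fifths])
    (hp.edge_le t hf.t_pos.le hf.t_le_half)

theorem m_mul_le_abs_mul_abs_of_pos (h : BoundConstants r s X θ η φ m) {p q : ℝ}
    (hp : PastState r η m x y) (hf : FutureState r s X θ φ t z) (hp' : p = 1 ∨ p = -1)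
    (hq : q = 1 ∨ q = -1) :
    m * (1 + x * t) ≤ |p - (x * q - y)| * |q + t * p - z| := by
  have ht := hf.t_pos
  have ht' := hf.t_le_half
  have hz := hf.z_nonneg
  have hzt := hf.z_le_t
  have hx := hp.x_nonneg
  have hx' := hp.x_le
  have hη := h.eta_le
  have hm := h.m_pos
  have hmt := h.m_le_one_sub hf
  have hxt : 0 ≤ x * t := by positivity
  have hxt' : x * t ≤ t := by nlinarith
  have hxy : x * t ≤ x + y := by nlinarith [hp.neg_mul_le_y]
  rw [← abs_mul]
  rcases hp' with rfl | rfl <;> rcases hq with rfl | rfl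
  · refine le_trans ?_ (le_abs_self _)
    have hpos : 0 ≤ (1 - x + y) * (t - z) :=
      mul_nonneg (by nlinarith [hp.neg_mul_le_y]) (by linarith)
    linarith [hp.m_mul_le t ht.le ht' hf.t_mul_le]
  · refine le_trans ?_ (neg_le_abs _)
    have hmul : m * (1 + x * t) ≤ (1 - t + z) * (1 + x + y) :=
      mul_le_mul (by linarith) (by linarith) (by linarith) hf.pos.le
    linarith
  · refine le_trans ?_ (neg_le_abs _)
    linarith [h.m_mul_le_corner_add hp hf]
  · refine le_trans ?_ (le_abs_self _)
    have hmul : m * (1 + x * t) ≤ (1 - x - y) * (1 + t + z) :=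
      mul_le_mul hp.m_le (by linarith) (by linarith) (hm.le.trans hp.m_le)
    linarith

theorem m_mul_le_abs_mul_abs_of_neg (h : BoundConstants r s X θ η φ m) {p q : ℝ}
    (hp : StrongPastState r s X θ η φ m x y) (hf : FutureState r s X θ φ t z)
    (hp' : p = 1 ∨ p = -1) (hq : q = 1 ∨ q = -1) :
    m * (1 - x * t) ≤ |p + (x * q - y)| * |q + t * p - z| := by
  have ht := hf.t_pos
  have hz := hf.z_nonneg
  have hzt := hf.z_le_t
  have hx := hp.x_nonneg
  have hx' := hp.x_le_two_fifths
  have hy := hp.y_le_eta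
  have hy' := hp.neg_mul_le_y
  have hm := h.m_pos
  have hm' := h.m_le_one
  have hxη : m ≤ 1 - x * η := by
    nlinarith [h.m_mul_s_le, h.eta_mul_s, h.theta_le, h.three_le_s]
  have hmx : m * (1 - x * t) ≤ m := by nlinarith [mul_nonneg hx ht.le]
  rw [← abs_mul]
  rcases hp' with rfl | rfl <;> rcases hq with rfl | rfl
  · refine le_trans ?_ (le_abs_self _)
    have hmul : (1 + x - y) * 1 ≤ (1 + x - y) * (1 + t - z) :=
      mul_le_mul_of_nonneg_left (by linarith) (by linarith [h.eta_le])
    linarith [hp.y_le_mul]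
  · refine le_trans ?_ (neg_le_abs _)
    linarith [hp.m_mul_le_of_future t z hf]
  · refine le_trans ?_ (neg_le_abs _)
    linarith [h.m_mul_le_corner_sub hp hf]
  · refine le_trans ?_ (le_abs_self _)
    have hmul : 1 * 1 ≤ (1 + x + y) * (1 + t + z) :=
      mul_le_mul (by nlinarith [h.eta_le]) (by linarith) zero_le_one (by nlinarith [h.eta_le])
    linarith

theorem m_mul_le_abs_mul_abs (h : BoundConstants r s X θ η φ m) {ε p q : ℝ}
    (hp : SignedPastState r s X θ η φ m ε x y) (hf : FutureState r s X θ φ t z)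
    (hp' : p = 1 ∨ p = -1) (hq : q = 1 ∨ q = -1) :
    m * (1 + ε * x * t) ≤ |p - ε * (x * q - y)| * |q + t * p - z| := by
  obtain rfl | ⟨rfl, hstrong⟩ := hp.sign
  · simpa only [one_mul] using h.m_mul_le_abs_mul_abs_of_pos hp.toPastState hf hp' hq
  · simpa only [neg_mul, one_mul, sub_neg_eq_add, ← sub_eq_add_neg] using
      h.m_mul_le_abs_mul_abs_of_neg hstrong hf hp' hq

end BoundConstants

end Corners

section CriticalPairs

variable {r s X θ η φ m x y t z ε : ℝ}

theorem SignedPastState.eps_eq (hp : SignedPastState r s X θ η φ m ε x y) : ε = 1 ∨ ε = -1 :=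
  hp.sign.imp id And.left

theorem sub_one_mul_sub_one_lt_of_abs_lt {κ w U A : ℝ} (hκ : κ = 1 ∨ κ = -1) (ht : 0 < t)
    (hA : t * A = 1) (hz : 0 ≤ z) (hzt : z ≤ t) (hlt : |κ * w + t * (-κ * U) - z| < 1) :
    (w - 1) * A - 1 < U := by
  have hmul : w - 1 - t < t * U := by
    rw [abs_lt] at hlt
    rcases hκ with rfl | rfl <;> linarith
  refine lt_of_mul_lt_mul_left (a := t) ?_ ht.le
  linear_combination hmul + (w - 1) * hA

theorem add_mul_sub_one_lt_of_abs_lt {κ w U a : ℝ} (hκ : κ = 1 ∨ κ = -1) (hε : ε = 1 ∨ ε = -1)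
    (hy : |y| ≤ η) (hlt : |-κ * U - ε * (x * (κ * w) - y)| < a + ε * x) :
    U + ε * x * (w - 1) < a + η := by
  rw [abs_lt] at hlt
  rw [abs_le] at hy
  rcases hκ with rfl | rfl <;> rcases hε with rfl | rfl <;> linarith

namespace BoundConstants

theorem lt_five_of_lt (h : BoundConstants r s X θ η φ m)
    (hp : SignedPastState r s X θ η φ m ε x y) {w U a A : ℝ} (hA : a - 1 / 2 ≤ A) (ha : 2 ≤ a)
    (hwU : (w - 1) * A - 1 < U) (hUa : U + ε * x * (w - 1) < a + η) : w < 5 := by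
  by_contra! hw
  have hη := h.eta_le
  have hAx : a - 0.9 ≤ A + ε * x := by
    obtain rfl | ⟨rfl, hstrong⟩ := hp.sign
    · linarith [hp.x_nonneg]
    · linarith [hstrong.x_le_two_fifths]
  have hmul : 4 * (a - 0.9) ≤ (w - 1) * (A + ε * x) :=
    mul_le_mul (by linarith) hAx (by linarith) (by linarith)
  linarith

theorem eq_one_of_lt (h : BoundConstants r s X θ η φ m)
    (hp : SignedPastState r s X θ η φ m ε x y) {w U a : ℤ} {A : ℝ} (hA : (a : ℝ) - 1 / 2 ≤ A)
    (hA' : 2 ≤ A) (ha : 2 ≤ a) (hw : 1 ≤ w) (hwo : Odd w) (hUo : Odd U)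
    (hwU : ((w : ℝ) - 1) * A - 1 < U) (hUa : (U : ℝ) + ε * x * (w - 1) < a + η) : w = 1 := by
  have hη := h.eta_le
  by_contra hne
  have hw5 : w < 5 := by exact_mod_cast h.lt_five_of_lt hp hA (by exact_mod_cast ha) hwU hUa
  obtain rfl : w = 3 := by
    obtain ⟨k, rfl⟩ := hwo
    lia
  push_cast at hwU hUa
  obtain rfl | ⟨rfl, hstrong⟩ := hp.sign
  · linarith [hp.x_nonneg]
  · have hx := hstrong.x_le_two_fifths
    have hU3 : 3 < U := by exact_mod_cast (by linarith : (3 : ℝ) < U)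
    have hU5 : 5 ≤ U := by
      obtain ⟨k, rfl⟩ := hUo
      lia
    have hUR : (5 : ℝ) ≤ U := by exact_mod_cast hU5
    linarith

theorem exists_sign_eq_of_abs_lt (h : BoundConstants r s X θ η φ m)
    (hp : SignedPastState r s X θ η φ m ε x y) (hf : FutureState r s X θ φ t z) {A : ℝ}
    {a p q : ℤ} (hA : t * A = 1) (hA' : (a : ℝ) - 1 / 2 ≤ A) (ha : 2 ≤ a) (hpo : Odd p)
    (hqo : Odd q) (hlt : |(p : ℝ) - ε * (x * q - y)| < a + ε * x)
    (hlt' : |(q : ℝ) + t * p - z| < 1) :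
    ∃ κ : ℤ, (κ = 1 ∨ κ = -1) ∧ q = κ ∧
      (p = 1 ∨ p = -1 ∨ ∃ U : ℤ, p = -κ * U ∧ 3 ≤ U ∧ U ≤ a) := by
  obtain ⟨κ, w, hκ, rfl, hw⟩ : ∃ κ w : ℤ, (κ = 1 ∨ κ = -1) ∧ q = κ * w ∧ 1 ≤ w := by
    rcases lt_trichotomy q 0 with hq | rfl | hq
    · exact ⟨-1, -q, Or.inr rfl, by ring, by lia⟩
    · simp at hqo
    · exact ⟨1, q, Or.inl rfl, by ring, by lia⟩
  obtain ⟨U, rfl⟩ : ∃ U : ℤ, p = -κ * U := ⟨-κ * p, by rcases hκ with rfl | rfl <;> ring⟩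
  have hwo : Odd w := (Int.odd_mul.1 hqo).2
  have hUo : Odd U := (Int.odd_mul.1 hpo).2
  have hκR : (κ : ℝ) = 1 ∨ (κ : ℝ) = -1 := by exact_mod_cast hκ
  have hη := h.eta_le
  push_cast at hlt hlt'
  have hwU := sub_one_mul_sub_one_lt_of_abs_lt hκR hf.t_pos hA hf.z_nonneg hf.z_le_t hlt'
  have hUa := add_mul_sub_one_lt_of_abs_lt hκR hp.eps_eq
    (abs_le.2 ⟨hp.neg_eta_le_y h.eta_pos, hp.y_le_eta⟩) hlt
  have hA2 : 2 ≤ A := by nlinarith [hf.t_pos, hf.t_le_half]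
  obtain rfl := h.eq_one_of_lt hp hA' hA2 ha hw hwo hUo hwU hUa
  push_cast at hwU hUa
  have hUm : -1 < U := by exact_mod_cast (by linarith : (-1 : ℝ) < U)
  have hUa' : U < a + 1 := by exact_mod_cast (by linarith : (U : ℝ) < a + 1)
  refine ⟨κ, hκ, mul_one κ, ?_⟩
  rcases eq_or_ne U 1 with rfl | hU
  · rcases hκ with rfl | rfl <;> simp
  · refine Or.inr (Or.inr ⟨U, rfl, ?_, by lia⟩)
    obtain ⟨k, rfl⟩ := hUo
    lia

theorem m_mul_le_mul_of_three_le (h : BoundConstants r s X θ η φ m)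
    (hp : SignedPastState r s X θ η φ m ε x y) (hf : FutureState r s X θ φ t z) {ε' a U V : ℝ}
    (hε' : ε' = 1 ∨ ε' = -1) (hU : 3 ≤ U) (hV : 3 ≤ V) (haUV : a ≤ U + V + 1) :
    m * (a + ε' * t + ε * x) ≤ (U + ε * x - η) * (V + ε' * t - z) := by
  have hη := h.eta_le
  have hm := h.m_pos
  have hx := hp.x_nonneg
  have ht := hf.t_pos
  have ht' := hf.t_le_half
  have hz := hf.z_le_t
  set P := U + ε * x - η with hP
  set Q := V + ε' * t - z with hQ
  have hle : m * (a + ε' * t + ε * x) ≤ m * (P + Q + (1 + η + z)) :=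
    mul_le_mul_of_nonneg_left (by linarith) hm.le
  have hQV : 3 - t - z ≤ Q := by
    rcases hε' with rfl | rfl <;> linarith
  refine hle.trans ?_
  rcases le_or_gt s 6 with hs | hs
  · have hP' : 2.16 ≤ P := by
      obtain rfl | ⟨rfl, hstrong⟩ := hp.sign
      · linarith
      · linarith [hstrong.x_le_two_fifths]
    have hm' : m ≤ 2 / 3 := by nlinarith [h.m_mul_s_le, h.three_le_s]
    have hle' : m * (P + Q + (1 + η + z)) ≤ 2 / 3 * (P + Q + 2) :=
      mul_le_mul hm' (by linarith) (by linarith [h.eta_pos, hf.z_nonneg]) (by norm_num)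
    have hPQ : 0 ≤ (P - 2) * (Q - 2) := mul_nonneg (by linarith) (by linarith)
    linarith
  · have hr5 : 5 ≤ r := by linarith [h.s_le_r_add_one]
    have hr : 6 ≤ r := by rcases h.s_eq_r_or_six_le_r hr5 with hsr | hr <;> linarith
    have ht6 : t ≤ 0.182 := by nlinarith [hf.t_mul_le]
    have hη6 : η ≤ 0.218 := by nlinarith [h.eta_mul_s, h.theta_le, h.eta_pos]
    have hP' : 2.6 ≤ P := by
      obtain rfl | ⟨rfl, hstrong⟩ := hp.sign
      · linarith
      · nlinarith [hstrong.x_mul_le_of_five_le hr5]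
    have hle' : m * (P + Q + (1 + η + z)) ≤ 1 * (P + Q + 1.4) :=
      mul_le_mul h.m_le_one (by linarith) (by linarith [h.eta_pos, hf.z_nonneg]) zero_le_one
    have hPQ : 0 ≤ (P - 2.6) * (Q - 2.6) := mul_nonneg (by linarith) (by linarith)
    linarith

end BoundConstants

end CriticalPairs

section Expansion

/-- A continued fraction expansion `1 / (a 0 + ε 1 / (a 1 + ε 2 / ⋯))` of `t 0` with tails `t i`,
together with the absolute values `z i` of the normalised tails of the series of the `λ`'s. The
partial quotients are at least `r`, the odd ones at least `s` and the even ones at least `X` (up to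
the value `2` when `r = 2`). -/
structure Expansion (r s X : ℝ) where
  a : ℕ → ℤ
  ε : ℕ → ℤ
  t : ℕ → ℝ
  z : ℕ → ℝ
  t_pos : ∀ i, 0 < t i
  t_le_half : ∀ i, t i ≤ 1 / 2
  t_mul : ∀ i, t i * (a i + ε (i + 1) * t (i + 1)) = 1
  eps_eq : ∀ i, ε i = 1 ∨ ε i = -1
  r_le : ∀ i, r ≤ a i
  eq_s_or_le_of_odd : ∀ i, Odd (a i) → (a i : ℝ) = s ∨ s + 2 ≤ a i
  X_le_or_eq_two_of_not_odd : ∀ i, ¬Odd (a i) → X ≤ a i ∨ a i = 2 ∧ r = 2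
  eps_succ_of_eq_two : ∀ i, a i = 2 → ε (i + 1) = 1
  z_of_odd : ∀ i, Odd (a i) → z i = t i * (1 - z (i + 1))
  z_of_not_odd : ∀ i, ¬Odd (a i) → z i = t i * z (i + 1)
  z_nonneg : ∀ i, 0 ≤ z i
  z_le_t : ∀ i, z i ≤ t i

namespace Expansion

variable {r s X θ η φ m : ℝ} (d : Expansion r s X)

theorem eps_cast_eq (i : ℕ) : (d.ε i : ℝ) = 1 ∨ (d.ε i : ℝ) = -1 := by
  exact_mod_cast d.eps_eq i

theorem sub_t_le (i : ℕ) : d.a i - d.t (i + 1) ≤ d.a i + d.ε (i + 1) * d.t (i + 1) := by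
  have ht := d.t_pos (i + 1)
  rcases d.eps_cast_eq (i + 1) with hε | hε <;> rw [hε] <;> linarith

theorem two_le_inv_t (i : ℕ) : 2 ≤ d.a i + d.ε (i + 1) * d.t (i + 1) := by
  nlinarith [d.t_mul i, d.t_pos i, d.t_le_half i]

theorem t_mul_le (i : ℕ) : d.t i * (r - 1 / 2) ≤ 1 := by
  calc d.t i * (r - 1 / 2) ≤ d.t i * (d.a i + d.ε (i + 1) * d.t (i + 1)) :=
        mul_le_mul_of_nonneg_left
          (by linarith [d.sub_t_le i, d.r_le i, d.t_le_half (i + 1)]) (d.t_pos i).le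
    _ = 1 := d.t_mul i

theorem t_mul_t_le_phi (h : BoundConstants r s X θ η φ m) (h2 : r ≠ 2) (i : ℕ) :
    d.t i * d.t (i + 1) ≤ φ := by
  have hr := h.three_le_r h2
  have hφ := h.r_eq_two_or_phi_mul.resolve_left h2
  have ht := d.t_pos i
  have ht' := d.t_pos (i + 1)
  have ht4 : d.t i ≤ 0.4 := by nlinarith [d.t_mul_le i]
  have ht4' : d.t (i + 1) ≤ 0.4 := by nlinarith [d.t_mul_le (i + 1)]
  have htt : d.t i * d.t (i + 1) ≤ 0.16 := by nlinarith
  have httr : d.t i * (d.t (i + 1) * (r - 1 / 2)) ≤ d.t i * 1 :=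
    mul_le_mul_of_nonneg_left (d.t_mul_le (i + 1)) ht.le
  have hφr : 1 ≤ φ * (r + 1) := by nlinarith [h.X_le_r_add_one h2, h.phi_pos]
  refine le_of_mul_le_mul_right (a := r + 1) ?_ (by linarith)
  linarith

theorem t_sub_z_sub_le_half (h : BoundConstants r s X θ η φ m) (h2 : r ≠ 2) (i : ℕ) {c : ℝ}
    (hc : 0 ≤ c) (hd : d.t (i + 1) - d.z (i + 1) - φ ≤ c) : d.t i - d.z i - φ ≤ c / 2 := by
  have hφ := h.r_eq_two_or_phi_mul.resolve_left h2
  have hφ0 := h.phi_pos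
  have hφ1 := h.phi_le
  have ht := d.t_pos i
  have ht' := d.t_pos (i + 1)
  have hz := d.z_nonneg (i + 1)
  have htA := d.t_mul i
  by_cases ho : Odd (d.a i)
  · nlinarith [d.t_mul_t_le_phi h h2 i, d.z_of_odd i ho, d.z_le_t (i + 1)]
  have hX := (d.X_le_or_eq_two_of_not_odd i ho).resolve_right (h2 ·.2)
  have htX : d.t i * X ≤ d.t i * d.a i := mul_le_mul_of_nonneg_left hX ht.le
  rcases d.eps_cast_eq (i + 1) with hε | hε
  · have htφ : d.t i ≤ φ := by
      rw [hε] at htA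
      refine le_of_mul_le_mul_right (a := X) ?_ (by linarith [h.four_le_X])
      nlinarith [mul_pos ht ht']
    linarith [d.z_nonneg i]
  · rw [hε] at htA
    have hsub : (d.t i - φ) * (X - φ) ≤ d.t i * (d.t (i + 1) - φ) := by linarith
    have hφt : d.t i - φ ≤ φ * (d.t i * (d.t (i + 1) - φ)) := by
      linear_combination φ * hsub + (φ - d.t i) * hφ
    have hφc : φ * d.t i * (d.t (i + 1) - d.z (i + 1) - φ) ≤ φ * d.t i * c :=
      mul_le_mul_of_nonneg_left hd (by positivity)
    have hφz : φ * (d.t i * d.z (i + 1)) ≤ 1 * (d.t i * d.z (i + 1)) :=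
      mul_le_mul_of_nonneg_right (by linarith) (by positivity)
    have hφh : φ * d.t i * c ≤ 1 / 2 * c := 
      mul_le_mul_of_nonneg_right (by nlinarith [d.t_le_half i]) hc
    rw [d.z_of_not_odd i ho]
    linarith

theorem t_le_phi_add (h : BoundConstants r s X θ η φ m) (i : ℕ) : d.t i ≤ φ + d.z i := by
  by_cases h2 : r = 2
  · obtain ⟨-, -, rfl⟩ := h.eq_of_r_eq_two h2
    linarith [d.t_le_half i, d.z_nonneg i]
  have hpow : ∀ n i, d.t i - d.z i - φ ≤ (1 / 2 : ℝ) ^ n := by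
    intro n
    induction n with
    | zero =>
      intro i
      rw [pow_zero]
      linarith [d.t_le_half i, d.z_nonneg i, h.phi_pos]
    | succ n ih =>
      intro i
      rw [pow_succ, ← div_eq_mul_one_div]
      exact d.t_sub_z_sub_le_half h h2 i (by positivity) (ih _)
  by_contra! hlt
  obtain ⟨n, hn⟩ := exists_pow_lt_of_lt_one (by linarith : 0 < d.t i - d.z i - φ)
    (by norm_num : (1 / 2 : ℝ) < 1)
  linarith [hpow n i]

theorem exists_z_eq_t_mul (i : ℕ) : ∃ w, d.z i = d.t i * w ∧
    (w = 1 - d.z (i + 1) ∧ s ≤ d.a i ∨ w = d.z (i + 1) ∧ (X ≤ d.a i ∨ r = 2)) := by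
  by_cases ho : Odd (d.a i)
  · exact ⟨_, d.z_of_odd i ho, Or.inl ⟨rfl, by
      rcases d.eq_s_or_le_of_odd i ho with ha | ha <;> linarith⟩⟩
  · exact ⟨_, d.z_of_not_odd i ho,
      Or.inr ⟨rfl, (d.X_le_or_eq_two_of_not_odd i ho).imp_right And.right⟩⟩

theorem phi_mul_le (h : BoundConstants r s X θ η φ m) (i : ℕ) :
    (1 - φ) * (s + θ - d.t i) ≤ (1 - d.t i + d.z i) * (s + θ - φ) := by
  obtain ⟨w, hz, hw⟩ := d.exists_z_eq_t_mul i
  have hφ0 := h.phi_pos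
  have hφ1 := h.phi_le
  have hB : 3 ≤ s + θ := by linarith [h.three_le_s, h.theta_pos]
  have hz0 := d.z_nonneg (i + 1)
  have hz1 := (d.z_le_t (i + 1)).trans (d.t_le_half (i + 1))
  have htA := d.t_mul i
  set A := d.a i + d.ε (i + 1) * d.t (i + 1)
  have hA' : d.a i - φ - d.z (i + 1) ≤ A := by
    linarith [d.sub_t_le i, d.t_le_phi_add h (i + 1)]
  have hkey : 0 ≤ (φ * A - 1) * (s + θ - 1) + w * (s + θ - φ) := by
    rcases h.r_eq_two_or_phi_mul with h2 | hφ
    · obtain ⟨-, -, rfl⟩ := h.eq_of_r_eq_two h2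
      have hw0 : 0 ≤ w := by rcases hw with ⟨rfl, -⟩ | ⟨rfl, -⟩ <;> linarith
      have hA2 : 2 ≤ A := d.two_le_inv_t i
      exact add_nonneg (mul_nonneg (by linarith) (by linarith)) (mul_nonneg hw0 (by linarith))
    · have hφ3 : φ ≤ 2 / 7 := by nlinarith [h.four_le_X]
      have hw1 : 1 - φ * A ≤ w := by
        rcases hw with ⟨rfl, ha⟩ | ⟨rfl, ha | h2⟩
        · nlinarith [h.X_le_s_add_one]
        · nlinarith
        · nlinarith [h.eq_of_r_eq_two h2]
      have hw0 : 0 ≤ w := by rcases hw with ⟨rfl, -⟩ | ⟨rfl, -⟩ <;> linarith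
      nlinarith
  have ht := mul_nonneg (d.t_pos i).le hkey
  linear_combination ht + φ * (s + θ - 1) * htA - (s + θ - φ) * hz

theorem edge_le (h : BoundConstants r s X θ η φ m) (i : ℕ) :
    (s - φ - 2) * (X + θ - d.t i) ≤ (1 - d.t i - d.z i) * ((s - φ) * (X + θ) - 1) := by
  obtain ⟨w, hz, hw⟩ := d.exists_z_eq_t_mul i
  have hs := h.three_le_s
  have hφ := h.phi_le
  have hB : 4 ≤ X + θ := by linarith [h.four_le_X, h.theta_pos]
  have hsB : 2.5 * (X + θ) ≤ (s - φ) * (X + θ) :=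
    mul_le_mul_of_nonneg_right (by linarith) (by linarith)
  have hz0 := d.z_nonneg (i + 1)
  have hzt := d.z_le_t (i + 1)
  have ht' := d.t_le_half (i + 1)
  have htA := d.t_mul i
  set A := d.a i + d.ε (i + 1) * d.t (i + 1)
  have haA : d.a i - d.t (i + 1) ≤ A := d.sub_t_le i
  have hkey : 0 ≤ (A - (s - φ)) * (2 * (X + θ) - 1) + (1 - w) * ((s - φ) * (X + θ) - 1) := by
    obtain ⟨rfl, ha⟩ | ⟨rfl, ha⟩ := hw
    · nlinarith [d.t_le_phi_add h (i + 1)]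
    by_cases h2 : r = 2
    · obtain ⟨hs3, -, hφ2⟩ := h.eq_of_r_eq_two h2
      have hA2 : 2 ≤ A := d.two_le_inv_t i
      nlinarith
    have ha := ha.resolve_right h2
    obtain hX | ⟨hX, h4⟩ := h.X_eq_s_add_one_or_eq_s_sub_one
    · exact add_nonneg (mul_nonneg (by linarith [h.phi_pos]) (by linarith))
        (mul_nonneg (by linarith) (by linarith))
    · have ht27 : d.t (i + 1) ≤ 2 / 7 := by nlinarith [d.t_mul_le (i + 1), d.t_pos (i + 1)]
      have hsB' : 4.5 * (X + θ) ≤ (s - φ) * (X + θ) :=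
        mul_le_mul_of_nonneg_right (by linarith [h.five_le_s h4]) (by linarith)
      nlinarith [h.phi_pos]
  have ht := mul_nonneg (d.t_pos i).le hkey
  linear_combination ht + (2 * (X + θ) - 1) * htA + ((s - φ) * (X + θ) - 1) * hz

theorem futureState (h : BoundConstants r s X θ η φ m) (i : ℕ) :
    FutureState r s X θ φ (d.t i) (d.z i) :=
  ⟨d.t_pos i, d.t_le_half i, d.t_mul_le i, d.z_nonneg i, d.z_le_t i, d.t_le_phi_add h i,
    d.phi_mul_le h i, d.edge_le h i⟩

/-- The backward continued fraction `1 / (a (i - 1) + ε (i - 1) / (a (i - 2) + ⋯))`. -/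
noncomputable def pastX (d : Expansion r s X) : ℕ → ℝ
  | 0 => 0
  | i + 1 => (d.a i + d.ε i * pastX d i)⁻¹

/-- The part of the series of the `λ`'s below the index `i`, read backwards and normalised: the
counterpart of `z` for the backward continued fraction `pastX`. -/
noncomputable def pastY (d : Expansion r s X) : ℕ → ℝ
  | 0 => 0
  | i + 1 => d.pastX (i + 1) * if Odd (d.a i) then 1 + d.ε i * pastY d i else -(d.ε i * pastY d i)

theorem pastY_succ_of_odd {i : ℕ} (ho : Odd (d.a i)) :
    d.pastY (i + 1) = d.pastX (i + 1) * (1 + d.ε i * d.pastY i) := by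
  rw [pastY, if_pos ho]

theorem pastY_succ_of_not_odd {i : ℕ} (ho : ¬Odd (d.a i)) :
    d.pastY (i + 1) = d.pastX (i + 1) * -(d.ε i * d.pastY i) := by
  rw [pastY, if_neg ho]

theorem two_le_a (h : BoundConstants r s X θ η φ m) (i : ℕ) : 2 ≤ d.a i := by
  exact_mod_cast h.two_le_r.trans (d.r_le i)

theorem pastX_succ_mul (h : BoundConstants r s X θ η φ m) {i : ℕ}
    (hp : PastState r η m (d.pastX i) (d.pastY i)) :
    d.pastX (i + 1) * (d.a i + d.ε i * d.pastX i) = 1 := by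
  refine inv_mul_cancel₀ ?_
  have ha : (2 : ℝ) ≤ d.a i := by exact_mod_cast d.two_le_a h i
  have hx0 := hp.x_nonneg
  have hx1 := hp.x_le
  rcases d.eps_cast_eq i with hε | hε <;> rw [hε] <;> linarith

theorem strongPastState_succ (h : BoundConstants r s X θ η φ m) {i : ℕ}
    (hp : SignedPastState r s X θ η φ m (d.ε i) (d.pastX i) (d.pastY i)) (h2 : d.a i ≠ 2) :
    StrongPastState r s X θ η φ m (d.pastX (i + 1)) (d.pastY (i + 1)) := by
  have hx := d.pastX_succ_mul h hp.toPastState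
  by_cases ho : Odd (d.a i)
  · have ha := d.eq_s_or_le_of_odd i ho
    rw [d.pastY_succ_of_odd ho]
    obtain hε | ⟨hε, hs⟩ := hp.sign
    · rw [hε, one_mul] at hx ⊢
      exact h.strongPastState_odd_add hp.toPastState (by rcases ha with ha | ha <;> linarith) hx
    · rw [hε, neg_one_mul, ← sub_eq_add_neg] at hx ⊢
      exact h.strongPastState_odd_sub hs ha hx
  · have hX := (d.X_le_or_eq_two_of_not_odd i ho).resolve_right (h2 ·.1)
    rw [d.pastY_succ_of_not_odd ho]
    obtain hε | ⟨hε, hs⟩ := hp.sign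
    · rw [hε, one_mul] at hx ⊢
      exact h.strongPastState_even_add hp.toPastState hX hx
    · rw [hε, neg_one_mul] at hx ⊢
      rw [neg_neg]
      exact h.strongPastState_even_sub hs hX hx

theorem pastState_succ_of_eq_two (h : BoundConstants r s X θ η φ m) {i : ℕ}
    (hp : SignedPastState r s X θ η φ m (d.ε i) (d.pastX i) (d.pastY i)) (h2 : d.a i = 2) :
    PastState r η m (d.pastX (i + 1)) (d.pastY (i + 1)) := by
  have hx := d.pastX_succ_mul h hp.toPastState
  have ho : ¬Odd (d.a i) := by simp [h2]
  have hr : r = 2 := le_antisymm (by simpa [h2] using d.r_le i) h.two_le_r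
  rw [d.pastY_succ_of_not_odd ho]
  rw [h2, Int.cast_ofNat] at hx
  obtain hε | ⟨hε, hs⟩ := hp.sign
  · rw [hε, one_mul] at hx ⊢
    exact h.pastState_two_add hr hp.toPastState hx
  · rw [hε, neg_one_mul] at hx ⊢
    rw [neg_neg]
    exact h.pastState_two_sub hr hs hx

theorem signedPastState (h : BoundConstants r s X θ η φ m) (i : ℕ) :
    SignedPastState r s X θ η φ m (d.ε i) (d.pastX i) (d.pastY i) := by
  induction i with
  | zero =>
    have hs := h.strongPastState_zero
    exact ⟨hs.toPastState, (d.eps_cast_eq 0).imp_right (⟨·, hs⟩)⟩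
  | succ i ih =>
    by_cases h2 : d.a i = 2
    · exact ⟨d.pastState_succ_of_eq_two h ih h2, Or.inl (by simp [d.eps_succ_of_eq_two i h2])⟩
    · have hs := d.strongPastState_succ h ih h2
      exact ⟨hs.toPastState, (d.eps_cast_eq (i + 1)).imp_right (⟨·, hs⟩)⟩

end Expansion

end Expansion

section Descent

variable {r s X θ η φ m : ℝ}

theorem BoundConstants.m_mul_le_one (h : BoundConstants r s X θ η φ m) {ε x y t z : ℝ}
    (hp : SignedPastState r s X θ η φ m ε x y) (hf : FutureState r s X θ φ t z) :
    m * (1 + ε * x * t) ≤ 1 := by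
  have hm := h.m_le_one_sub hf
  have hm0 := h.m_pos
  have hx := hp.x_nonneg
  have hx1 := hp.x_le
  have ht := hf.t_pos
  have hxt : x * t ≤ t := mul_le_of_le_one_left ht.le (by linarith)
  rcases hp.eps_eq with rfl | rfl
  · nlinarith
  · nlinarith [mul_nonneg hx ht.le]

namespace Expansion

variable (d : Expansion r s X)

/-- The linear form attached to the expansion up to the index `i`. -/
noncomputable def pastForm (i : ℕ) (w : ℤ × ℤ) : ℝ :=
  w.1 - d.ε i * (d.pastX i * w.2 - d.pastY i)

/-- The linear form attached to the expansion from the index `i` on. -/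
noncomputable def futureForm (i : ℕ) (w : ℤ × ℤ) : ℝ :=
  w.2 + d.t i * w.1 - d.z i

/-- The renormalisation of a pair of integers at the index `i`, under which `pastForm` and
`futureForm` are multiplied by constants. -/
def step (i : ℕ) (w : ℤ × ℤ) : ℤ × ℤ :=
  if Odd (d.a i) then (-(d.ε (i + 1) * w.2), -(d.a i * w.2 + w.1 - 1))
  else (d.ε (i + 1) * w.2, d.a i * w.2 + w.1)

theorem odd_eps_mul {i : ℕ} {n : ℤ} (hn : Odd n) : Odd (d.ε i * n) := by
  rcases d.eps_eq i with hε | hε <;> simpa [hε] using hn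

theorem odd_step (i : ℕ) {w : ℤ × ℤ} (h1 : Odd w.1) (h2 : Odd w.2) :
    Odd (d.step i w).1 ∧ Odd (d.step i w).2 := by
  have hε := d.odd_eps_mul (i := i + 1) h2
  unfold step
  split_ifs with ho
  · exact ⟨hε.neg, (((ho.mul h2).add_odd h1).sub_odd odd_one).neg⟩
  · exact ⟨hε, ((Int.not_odd_iff_even.1 ho).mul_right _).add_odd h1⟩

theorem t_mul_abs_futureForm_step (i : ℕ) (w : ℤ × ℤ) :
    d.t i * |d.futureForm (i + 1) (d.step i w)| = |d.futureForm i w| := by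
  have habs : |d.t i * d.futureForm (i + 1) (d.step i w)| = |d.futureForm i w| := by
    rw [abs_eq_abs]
    unfold futureForm step
    split_ifs with ho
    · right
      push_cast
      rw [d.z_of_odd i ho]
      linear_combination -(w.2 : ℝ) * d.t_mul i
    · left
      push_cast
      rw [d.z_of_not_odd i ho]
      linear_combination (w.2 : ℝ) * d.t_mul i
  rwa [abs_mul, abs_of_pos (d.t_pos i)] at habs

theorem pastX_succ_mul_eq_one (h : BoundConstants r s X θ η φ m) (i : ℕ) :
    d.pastX (i + 1) * (d.a i + d.ε i * d.pastX i) = 1 :=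
  d.pastX_succ_mul h (d.signedPastState h i).toPastState

theorem abs_pastForm_step (h : BoundConstants r s X θ η φ m) (i : ℕ) (w : ℤ × ℤ) :
    |d.pastForm (i + 1) (d.step i w)| = d.pastX (i + 1) * |d.pastForm i w| := by
  have hx := d.pastX_succ_mul_eq_one h i
  have hε : |(d.ε (i + 1) : ℝ)| = 1 := by rcases d.eps_cast_eq (i + 1) with hε | hε <;> simp [hε]
  have habs : |d.pastForm (i + 1) (d.step i w)| =
      |d.ε (i + 1) * (d.pastX (i + 1) * d.pastForm i w)| := by
    rw [abs_eq_abs]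
    unfold pastForm step
    split_ifs with ho
    · left
      push_cast
      rw [d.pastY_succ_of_odd ho]
      linear_combination d.ε (i + 1) * (w.2 : ℝ) * hx
    · right
      push_cast
      rw [d.pastY_succ_of_not_odd ho]
      linear_combination -d.ε (i + 1) * (w.2 : ℝ) * hx
  rwa [abs_mul, abs_mul, hε, one_mul, abs_of_nonneg (d.signedPastState h (i + 1)).x_nonneg] at habs

/-- The lower bound for the product of the two linear forms. Both sides are multiplied by the same
constant when `w` is replaced by its renormalisation. -/
def FormBound (m : ℝ) (i : ℕ) (w : ℤ × ℤ) : Prop :=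
  m * (1 + d.ε i * d.pastX i * d.t i) ≤ |d.pastForm i w| * |d.futureForm i w|

theorem FormBound.of_step (h : BoundConstants r s X θ η φ m) {i : ℕ} {w : ℤ × ℤ}
    (hw : d.FormBound m (i + 1) (d.step i w)) : d.FormBound m i w := by
  have hx := d.pastX_succ_mul_eq_one h i
  have hx0 : 0 < d.pastX (i + 1) :=
    (d.signedPastState h (i + 1)).x_nonneg.lt_of_ne (fun h0 => by simp [← h0] at hx)
  refine le_of_mul_le_mul_left (a := d.pastX (i + 1)) ?_ hx0
  calc d.pastX (i + 1) * (m * (1 + d.ε i * d.pastX i * d.t i))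
      = d.t i * (m * (1 + d.ε (i + 1) * d.pastX (i + 1) * d.t (i + 1))) := by
        linear_combination m * d.t i * hx - m * d.pastX (i + 1) * d.t_mul i
    _ ≤ d.t i * (|d.pastForm (i + 1) (d.step i w)| * |d.futureForm (i + 1) (d.step i w)|) :=
        mul_le_mul_of_nonneg_left hw (d.t_pos i).le
    _ = d.pastX (i + 1) * (|d.pastForm i w| * |d.futureForm i w|) := by
        rw [d.abs_pastForm_step h, ← d.t_mul_abs_futureForm_step i w]
        ring

theorem formBound_of_eq_one_or_neg_one (h : BoundConstants r s X θ η φ m) {i : ℕ} {w : ℤ × ℤ}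
    (h1 : w.1 = 1 ∨ w.1 = -1) (h2 : w.2 = 1 ∨ w.2 = -1) : d.FormBound m i w :=
  h.m_mul_le_abs_mul_abs (d.signedPastState h i) (d.futureState h i) (by exact_mod_cast h1)
    (by exact_mod_cast h2)

theorem exists_step_eq {i : ℕ} {κ U : ℤ} (hκ : κ = 1 ∨ κ = -1) (hUa : U ≤ d.a i) :
    ∃ ω V : ℤ, (ω = 1 ∨ ω = -1) ∧ d.step i (-κ * U, κ) = (ω * d.ε (i + 1), ω * V) ∧
      -1 ≤ V ∧ d.a i ≤ U + V + 1 := by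
  unfold step
  split_ifs
  · refine ⟨-κ, d.a i - U - κ, by lia, Prod.ext (by ring) ?_, by lia, by lia⟩
    have hκ2 : κ * κ = 1 := by rcases hκ with rfl | rfl <;> rfl
    linear_combination -hκ2
  · exact ⟨κ, d.a i - U, hκ, Prod.ext (by ring) (by ring), by lia, by lia⟩

theorem formBound_of_three_le (h : BoundConstants r s X θ η φ m) {i : ℕ} {κ ω U V : ℤ}
    (hκ : κ = 1 ∨ κ = -1) (hω : ω = 1 ∨ ω = -1)
    (hstep : d.step i (-κ * U, κ) = (ω * d.ε (i + 1), ω * V)) (hU : 3 ≤ U) (hV : 3 ≤ V)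
    (haUV : d.a i ≤ U + V + 1) : d.FormBound m i (-κ * U, κ) := by
  have hp := d.signedPastState h i
  have hf := d.futureState h (i + 1)
  have hε := d.eps_cast_eq (i + 1)
  have hP : U + d.ε i * d.pastX i - η ≤ |d.pastForm i (-κ * U, κ)| := by
    have hy := hp.y_le_eta
    have hy' := hp.neg_eta_le_y h.eta_pos
    unfold pastForm
    rw [le_abs']
    rcases hκ with rfl | rfl <;> [left; right] <;> rcases hp.eps_eq with hεi | hεi <;>
      rw [hεi] <;> push_cast <;> linarith
  have hF : V + d.ε (i + 1) * d.t (i + 1) - d.z (i + 1) ≤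
      |d.futureForm (i + 1) (ω * d.ε (i + 1), ω * V)| := by
    unfold futureForm
    rw [le_abs']
    rcases hω with rfl | rfl <;> [right; left] <;> push_cast <;> linarith [hf.z_nonneg]
  have hU' : (3 : ℝ) ≤ U := by exact_mod_cast hU
  have hV' : (3 : ℝ) ≤ V := by exact_mod_cast hV
  have haUV' : (d.a i : ℝ) ≤ U + V + 1 := by exact_mod_cast haUV
  have hF0 : 0 ≤ V + d.ε (i + 1) * d.t (i + 1) - d.z (i + 1) := by
    rcases hε with hε | hε <;> rw [hε] <;> linarith [hf.t_le_half, hf.z_le_t]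
  have hmul := h.m_mul_le_mul_of_three_le hp hf hε hU' hV' haUV'
  unfold FormBound
  calc m * (1 + d.ε i * d.pastX i * d.t i)
      = d.t i * (m * (d.a i + d.ε (i + 1) * d.t (i + 1) + d.ε i * d.pastX i)) := by
        linear_combination -m * d.t_mul i
    _ ≤ d.t i * (|d.pastForm i (-κ * U, κ)| * |d.futureForm (i + 1) (d.step i (-κ * U, κ))|) := by
        rw [hstep]
        exact mul_le_mul_of_nonneg_left
          (hmul.trans (mul_le_mul hP hF hF0 (abs_nonneg _))) (d.t_pos i).le
    _ = |d.pastForm i (-κ * U, κ)| * |d.futureForm i (-κ * U, κ)| := by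
        rw [← d.t_mul_abs_futureForm_step i]
        ring

theorem formBound_of_mul (h : BoundConstants r s X θ η φ m) {i : ℕ} {κ U : ℤ}
    (hκ : κ = 1 ∨ κ = -1) (hUo : Odd (-κ * U)) (hU : 3 ≤ U) (hUa : U ≤ d.a i) :
    d.FormBound m i (-κ * U, κ) := by
  obtain ⟨ω, V, hω, hstep, hV, haUV⟩ := d.exists_step_eq hκ hUa
  have hκo : Odd κ := by rcases hκ with rfl | rfl <;> decide
  have hVo : Odd V := by
    have hodd := (d.odd_step i (w := (-κ * U, κ)) hUo hκo).2
    rw [hstep] at hodd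
    exact (Int.odd_mul.1 hodd).2
  by_cases hV1 : V = 1 ∨ V = -1
  · refine .of_step d h (d.formBound_of_eq_one_or_neg_one h ?_ ?_) <;> rw [hstep]
    · rcases hω with rfl | rfl <;> rcases d.eps_eq (i + 1) with hε | hε <;> simp [hε]
    · rcases hω with rfl | rfl <;> rcases hV1 with rfl | rfl <;> simp
  · have hV3 : 3 ≤ V := by
      obtain ⟨k, rfl⟩ := hVo
      lia
    exact d.formBound_of_three_le h hκ hω hstep hU hV3 haUV

theorem formBound_of_abs_pastForm (h : BoundConstants r s X θ η φ m) {i : ℕ} {w : ℤ × ℤ}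
    (h1 : Odd w.1) (h2 : Odd w.2) (hle : 1 ≤ |d.pastForm i w|)
    (hlt : |d.pastForm (i + 1) (d.step i w)| < 1) : d.FormBound m i w := by
  have hp := d.signedPastState h i
  have hf := d.futureState h i
  rcases le_or_gt 1 |d.futureForm i w| with hF | hF
  · exact (h.m_mul_le_one hp hf).trans (one_le_mul_of_one_le_of_one_le hle hF)
  have hx := d.pastX_succ_mul_eq_one h i
  have hP : |d.pastForm i w| < d.a i + d.ε i * d.pastX i := by
    rw [d.abs_pastForm_step h, ← hx] at hlt
    exact lt_of_mul_lt_mul_left hlt (d.signedPastState h (i + 1)).x_nonneg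
  have hA : d.a i - 1 / 2 ≤ d.a i + d.ε (i + 1) * d.t (i + 1) := by
    linarith [d.sub_t_le i, d.t_le_half (i + 1)]
  obtain ⟨κ, hκ, hq, hp1 | hp1 | ⟨U, hpU, hU, hUa⟩⟩ :=
    h.exists_sign_eq_of_abs_lt hp hf (d.t_mul i) hA (d.two_le_a h i) h1 h2 hP hF
  · exact d.formBound_of_eq_one_or_neg_one h (Or.inl hp1) (hq ▸ hκ)
  · exact d.formBound_of_eq_one_or_neg_one h (Or.inr hp1) (hq ▸ hκ)
  · obtain rfl : w = (-κ * U, κ) := Prod.ext hpU hq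
    exact d.formBound_of_mul h hκ h1 hU hUa

theorem formBound_of_one_le_abs_pastForm (h : BoundConstants r s X θ η φ m) (n : ℕ) :
    ∀ {i : ℕ} {w : ℤ × ℤ}, Odd w.1 → Odd w.2 → 1 ≤ |d.pastForm i w| →
      (5 / 8) ^ n * |d.pastForm i w| < 1 → d.FormBound m i w := by
  induction n with
  | zero =>
    intro i w _ _ hle hlt
    linarith
  | succ n ih =>
    intro i w h1 h2 hle hlt
    rcases lt_or_ge |d.pastForm (i + 1) (d.step i w)| 1 with hstep | hstep
    · exact d.formBound_of_abs_pastForm h h1 h2 hle hstep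
    obtain ⟨h1', h2'⟩ := d.odd_step i h1 h2
    refine .of_step d h (ih h1' h2' hstep (lt_of_le_of_lt ?_ hlt))
    rw [d.abs_pastForm_step h, pow_succ, mul_assoc]
    gcongr
    exact (d.signedPastState h (i + 1)).x_le

theorem m_le_abs_mul_abs (h : BoundConstants r s X θ η φ m) {p q : ℤ} (hp : Odd p) (hq : Odd q) :
    m ≤ |(p : ℝ)| * |q + d.t 0 * p - d.z 0| := by
  have hp0 : p ≠ 0 := by
    rintro rfl
    simp at hp
  have hp1 : (1 : ℝ) ≤ |(p : ℝ)| := by exact_mod_cast Int.one_le_abs hp0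
  obtain ⟨n, hn⟩ := exists_pow_lt_of_lt_one (by positivity : 0 < 1 / |(p : ℝ)|)
    (by norm_num : (5 / 8 : ℝ) < 1)
  have hpast : d.pastForm 0 (p, q) = p := by simp [pastForm, pastX, pastY]
  have hbound := d.formBound_of_one_le_abs_pastForm h n (i := 0) (w := (p, q)) hp hq
    (by rwa [hpast]) (by rwa [hpast, ← lt_div_iff₀ (by linarith)])
  simpa [FormBound, hpast, pastX, futureForm] using hbound

end Expansion

end Descent

section Renormalisation

variable {α : ℝ}

/-- The renormalisation of a pair of integers `(u, v)` along the expansion of `α`: the form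
`v + nicfT α k * u - dplus α k` in the `k`-th pair is `(nicfD α k)⁻¹` times the form in `(u, v)`. -/
noncomputable def orbit (α : ℝ) (u v : ℤ) : ℕ → ℤ × ℤ
  | 0 => (u, v)
  | k + 1 => (nicfE α (k + 2) * (orbit α u v k).2,
      nicfA α (k + 1) * (orbit α u v k).2 + (orbit α u v k).1 - lamStar α (k + 1))

theorem odd_of_eq_one_or_neg_one {n : ℤ} (hn : n = 1 ∨ n = -1) : Odd n := by
  rcases hn with rfl | rfl <;> decide

theorem odd_orbit {u v : ℤ} (hu : Odd u) (hv : Odd v) (k : ℕ) :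
    Odd (orbit α u v k).1 ∧ Odd (orbit α u v k).2 := by
  induction k with
  | zero => exact ⟨hu, hv⟩
  | succ k ih =>
    refine ⟨(odd_of_eq_one_or_neg_one (nicfE_eq_one_or_neg_one (k + 2))).mul ih.2, ?_⟩
    by_cases ho : Odd (nicfA α (k + 1))
    · rw [orbit, lamStar_succ_of_odd ho]
      exact ((ho.mul ih.2).add_odd ih.1).sub_odd
        (odd_of_eq_one_or_neg_one (nextSign_eq_one_or_neg_one k))
    · rw [orbit, lamStar_of_not_odd ho, sub_zero]
      exact ((Int.not_odd_iff_even.1 ho).mul_right _).add_odd ih.1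

namespace IsNicfTail

theorem nicfD_mul_orbit (hα : IsNicfTail α) (u v : ℤ) (k : ℕ) :
    nicfD α k * ((orbit α u v k).2 + nicfT α k * (orbit α u v k).1 - dplus α k) =
      v + α * u - dplus α 0 := by
  induction k with
  | zero => simp [orbit, nicfD_zero, nicfT]
  | succ k ih =>
    rw [← ih, nicfD_succ, orbit, hα.dplus_eq k]
    push_cast
    linear_combination nicfD α k * ((orbit α u v k).2 : ℝ) * hα.nicfT_mul k

theorem nicfD_mul_abs_orbit_snd_le (hα : IsNicfTail α) {u v : ℤ}
    (huv : |v + α * u - dplus α 0| ≤ 1) (k : ℕ) :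
    nicfD α k * |((orbit α u v k).2 : ℝ)| ≤
      nicfD α (k + 1) * |((orbit α u v k).1 : ℝ)| + nicfD α k * 2 + 1 := by
  have hD := hα.nicfD_pos k
  calc nicfD α k * |((orbit α u v k).2 : ℝ)|
      = |-(nicfD α (k + 1) * (orbit α u v k).1) + nicfD α k * dplus α k +
          (v + α * u - dplus α 0)| := by
        rw [← hα.nicfD_mul_orbit u v k, nicfD_succ, ← abs_of_pos hD, ← abs_mul, abs_of_pos hD]
        ring_nf
    _ ≤ nicfD α (k + 1) * |((orbit α u v k).1 : ℝ)| + nicfD α k * 2 + 1 := by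
        refine (abs_add_three _ _ _).trans ?_
        rw [abs_neg, abs_mul, abs_mul, abs_of_pos hD, abs_of_pos (hα.nicfD_pos (k + 1))]
        gcongr
        exact hα.abs_dplus_le_two k

theorem abs_orbit_succ_fst (u v : ℤ) (k : ℕ) :
    |((orbit α u v (k + 1)).1 : ℝ)| = |((orbit α u v k).2 : ℝ)| := by
  rcases nicfE_eq_one_or_neg_one (α := α) (k + 2) with hε | hε <;> simp [orbit, hε]

theorem exists_abs_orbit_fst_le (hα : IsNicfTail α) (k : ℕ) :
    ∃ C : ℝ, 0 ≤ C ∧ ∀ u v : ℤ, |v + α * u - dplus α 0| ≤ 1 →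
      |((orbit α u v k).1 : ℝ)| ≤ nicfD α k * (|(u : ℝ)| + C) := by
  induction k with
  | zero => exact ⟨0, le_rfl, fun u v _ => by simp [orbit, nicfD_zero]⟩
  | succ k ih =>
    obtain ⟨C, hC, hle⟩ := ih
    have hD := hα.nicfD_pos k
    have hD' := hα.nicfD_pos (k + 1)
    refine ⟨C + (2 + 1 / nicfD α k) / nicfD α (k + 1), by positivity, fun u v huv => ?_⟩
    refine le_of_mul_le_mul_left ?_ hD
    calc nicfD α k * |((orbit α u v (k + 1)).1 : ℝ)|
        ≤ nicfD α (k + 1) * |((orbit α u v k).1 : ℝ)| + nicfD α k * 2 + 1 :=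
          abs_orbit_succ_fst u v k ▸ hα.nicfD_mul_abs_orbit_snd_le huv k
      _ ≤ nicfD α (k + 1) * (nicfD α k * (|(u : ℝ)| + C)) + nicfD α k * 2 + 1 := by
          gcongr
          exact hle u v huv
      _ = nicfD α k *
            (nicfD α (k + 1) * (|(u : ℝ)| + (C + (2 + 1 / nicfD α k) / nicfD α (k + 1)))) := by
          field_simp
          ring

/-- The tail from the index `K` on of the expansion of `α`, once its partial quotients satisfy the
required lower bounds. -/
noncomputable def expansion (hα : IsNicfTail α) {r s X : ℝ} (K : ℕ)
    (hr : ∀ i, r ≤ nicfA α (K + i + 1))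
    (hs : ∀ i, Odd (nicfA α (K + i + 1)) →
      (nicfA α (K + i + 1) : ℝ) = s ∨ s + 2 ≤ nicfA α (K + i + 1))
    (hX : ∀ i, ¬Odd (nicfA α (K + i + 1)) →
      X ≤ nicfA α (K + i + 1) ∨ nicfA α (K + i + 1) = 2 ∧ r = 2) : Expansion r s X where
  a i := nicfA α (K + i + 1)
  ε i := nicfE α (K + i + 1)
  t i := nicfT α (K + i)
  z i := normDplus α (K + i)
  t_pos i := (hα.tail (K + i)).pos
  t_le_half i := (hα.tail (K + i)).lt_half.le
  t_mul i := hα.nicfT_mul (K + i)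
  eps_eq _ := nicfE_eq_one_or_neg_one _
  r_le := hr
  eq_s_or_le_of_odd := hs
  X_le_or_eq_two_of_not_odd := hX
  eps_succ_of_eq_two i := (hα.two_le_nicfA (K + i)).2
  z_of_odd _ := hα.normDplus_of_odd
  z_of_not_odd _ := hα.normDplus_of_not_odd
  z_nonneg i := (hα.normDplus_mem_Icc (K + i)).1
  z_le_t i := (hα.normDplus_mem_Icc (K + i)).2

theorem exists_m_le_mul_abs_form (hα : IsNicfTail α) {r s X θ η φ m : ℝ}
    (h : BoundConstants r s X θ η φ m) (K : ℕ)
    (hr : ∀ i, r ≤ nicfA α (K + i + 1))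
    (hs : ∀ i, Odd (nicfA α (K + i + 1)) →
      (nicfA α (K + i + 1) : ℝ) = s ∨ s + 2 ≤ nicfA α (K + i + 1))
    (hX : ∀ i, ¬Odd (nicfA α (K + i + 1)) →
      X ≤ nicfA α (K + i + 1) ∨ nicfA α (K + i + 1) = 2 ∧ r = 2) :
    ∃ C : ℝ, 0 ≤ C ∧ ∀ u v : ℤ, Odd u → Odd v → |v + α * u - dplus α 0| ≤ 1 →
      m ≤ (|(u : ℝ)| + C) * |v + α * u - dplus α 0| := by
  obtain ⟨C, hC, hle⟩ := hα.exists_abs_orbit_fst_le K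
  refine ⟨C, hC, fun u v hu hv huv => ?_⟩
  obtain ⟨hu', hv'⟩ := odd_orbit (α := α) hu hv K
  set u' := (orbit α u v K).1
  set v' := (orbit α u v K).2
  have hσ := odd_of_eq_one_or_neg_one (nextSign_eq_one_or_neg_one (α := α) K)
  have hσ1 : |(nextSign α K : ℝ)| = 1 := by
    rcases nextSign_eq_one_or_neg_one (α := α) K with hσ | hσ <;> simp [hσ]
  have hD := hα.nicfD_pos K
  have hform : v + α * u - dplus α 0 = nicfD α K * (v' + nicfT α K * u' - dplus α K) :=
    (hα.nicfD_mul_orbit u v K).symm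
  calc m ≤ |((nextSign α K * u' : ℤ) : ℝ)| * |(nextSign α K * v' : ℤ) +
          nicfT α K * (nextSign α K * u' : ℤ) - normDplus α K| :=
        (hα.expansion K hr hs hX).m_le_abs_mul_abs h (hσ.mul hu') (hσ.mul hv')
    _ = |(u' : ℝ)| * |v' + nicfT α K * u' - dplus α K| := by
        have hfactor : ((nextSign α K * v' : ℤ) : ℝ) + nicfT α K * (nextSign α K * u' : ℤ) -
            normDplus α K = nextSign α K * (v' + nicfT α K * u' - dplus α K) := by
          rw [normDplus]
          push_cast
          ring
        rw [hfactor, abs_mul, Int.cast_mul, abs_mul, hσ1, one_mul, one_mul]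
    _ ≤ nicfD α K * (|(u : ℝ)| + C) * |v' + nicfT α K * u' - dplus α K| := by
        gcongr
        exact hle u v huv
    _ = (|(u : ℝ)| + C) * |v + α * u - dplus α 0| := by
        rw [hform, abs_mul, abs_of_pos hD]
        ring

theorem form_eq_two_mul_sub_gammaStar (hα : IsNicfTail α) (n p : ℤ) :
    ((-(2 * p + 1) : ℤ) : ℝ) + α * ((2 * n - 1 : ℤ) : ℝ) - dplus α 0 =
      2 * (n * α - gammaStar α - p) := by
  push_cast
  linear_combination hα.two_mul_gammaStar

theorem m_le_add_mul_abs_sub_gammaStar (hα : IsNicfTail α) {m C : ℝ}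
    (h : ∀ u v : ℤ, Odd u → Odd v → |v + α * u - dplus α 0| ≤ 1 →
      m ≤ (|(u : ℝ)| + C) * |v + α * u - dplus α 0|)
    {n p : ℤ} (hnp : |n * α - gammaStar α - p| ≤ 1 / 2) :
    m / 4 ≤ (|(n : ℝ)| + (C + 1) / 2) * |n * α - gammaStar α - p| := by
  have hodd := h (2 * n - 1) (-(2 * p + 1)) ⟨n - 1, by ring⟩ (Odd.neg ⟨p, rfl⟩)
  rw [hα.form_eq_two_mul_sub_gammaStar, abs_mul, abs_two] at hodd
  have hu : |((2 * n - 1 : ℤ) : ℝ)| ≤ 2 * |(n : ℝ)| + 1 := by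
    push_cast
    simpa [abs_mul] using abs_sub (2 * (n : ℝ)) 1
  have hmul := mul_le_mul_of_nonneg_right hu (abs_nonneg (n * α - gammaStar α - p))
  linarith [hodd (by linarith)]

theorem le_Mval_gammaStar_and_le_rho (hα : IsNicfTail α) {m C : ℝ} (hm : 0 < m) (hC : 0 ≤ C)
    (h : ∀ u v : ℤ, Odd u → Odd v → |v + α * u - dplus α 0| ≤ 1 →
      m ≤ (|(u : ℝ)| + C) * |v + α * u - dplus α 0|) :
    m / 4 ≤ Mval α (gammaStar α) ∧ m / 4 ≤ rho α := by
  have hM : m / 4 ≤ Mval α (gammaStar α) :=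
    le_Mval_of_forall_le_add_mul_nint hα.irrational (by linarith : 0 ≤ (C + 1) / 2) fun n =>
      hα.m_le_add_mul_abs_sub_gammaStar h (abs_sub_round _)
  refine ⟨hM, hM.trans (Mval_le_rho hα.irrational ?_)⟩
  rintro ⟨p, q, hpq⟩
  have hzero : (q : ℝ) * α - gammaStar α - (-p : ℤ) = 0 := by
    rw [hpq]
    push_cast
    ring
  have hle := hα.m_le_add_mul_abs_sub_gammaStar h (n := q) (p := -p) (by rw [hzero]; norm_num)
  rw [hzero, abs_zero, mul_zero] at hle
  linarith

end IsNicfTail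

end Renormalisation

section Parameters

theorem odd_eq_or_add_two_le {R : ℕ} {a : ℤ} (ha : Odd a) (hRa : (R : ℤ) ≤ a) {s : ℝ}
    (hs : s = if Odd R then (R : ℝ) else (R : ℝ) + 1) : (a : ℝ) = s ∨ s + 2 ≤ a := by
  obtain ⟨k, rfl⟩ := ha
  rw [hs]
  split_ifs with hR
  · obtain ⟨j, rfl⟩ := hR
    have : 2 * k + 1 = (2 * j + 1 : ℕ) ∨ (2 * j + 1 : ℕ) + 2 ≤ 2 * k + 1 := by omega
    exact_mod_cast this
  · obtain ⟨j, rfl⟩ := Nat.not_odd_iff_even.1 hR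
    have : 2 * k + 1 = (j + j : ℕ) + 1 ∨ (j + j : ℕ) + 1 + 2 ≤ 2 * k + 1 := by omega
    exact_mod_cast this

theorem max_four_le_or_eq_two {R : ℕ} (hR : 2 ≤ R) {a : ℤ} (ha : ¬Odd a) (hRa : (R : ℤ) ≤ a)
    {S : ℝ} (hS : S = if Even R then (R : ℝ) else (R : ℝ) + 1) :
    max 4 S ≤ a ∨ a = 2 ∧ (R : ℝ) = 2 := by
  obtain ⟨k, hk⟩ := Int.not_odd_iff_even.1 ha
  by_cases ha2 : a = 2
  · have hR2 : R = 2 := by omega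
    exact Or.inr ⟨ha2, by exact_mod_cast hR2⟩
  have ha4 : 4 ≤ a := by omega
  refine Or.inl (max_le (by exact_mod_cast ha4) ?_)
  rw [hS]
  split_ifs with hR'
  · exact_mod_cast hRa
  · obtain ⟨j, hj⟩ := Nat.not_even_iff_odd.1 hR'
    have hRa' : (R : ℤ) + 1 ≤ a := by omega
    exact_mod_cast hRa'

theorem three_le_of_eq_ite_odd {R : ℕ} (hR : 2 ≤ R) {s : ℝ}
    (hs : s = if Odd R then (R : ℝ) else (R : ℝ) + 1) : 3 ≤ s := by
  have hR' : (2 : ℝ) ≤ R := by exact_mod_cast hR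
  rw [hs]
  split_ifs with ho
  · have hR3 : 3 ≤ R := by
      obtain ⟨k, rfl⟩ := ho
      omega
    exact_mod_cast hR3
  · linarith

theorem four_le_of_eq_ite_even {R : ℕ} (hR : 3 ≤ R) {S : ℝ}
    (hS : S = if Even R then (R : ℝ) else (R : ℝ) + 1) : 4 ≤ S := by
  have hR' : (3 : ℝ) ≤ R := by exact_mod_cast hR
  rw [hS]
  split_ifs with he
  · have hR4 : 4 ≤ R := by
      obtain ⟨k, rfl⟩ := he
      omega
    exact_mod_cast hR4
  · linarith

theorem theta_one_mul {s θ : ℝ} (hθ : θ = (√(s ^ 2 + 4) - s) / 2) :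
    θ * (s + θ) = 1 := by
  rw [hθ]
  linear_combination (1 / 4) * Real.sq_sqrt (by positivity : 0 ≤ s ^ 2 + 4)

theorem theta_one_pos {s θ : ℝ} (hθ : θ = (√(s ^ 2 + 4) - s) / 2) : 0 < θ := by
  have hlt : s < √(s ^ 2 + 4) := Real.lt_sqrt_of_sq_lt (by linarith)
  linarith

theorem theta_two_mem_Ioc {R : ℕ} {S φ : ℝ}
    (hS : S = if Even R then (R : ℝ) else (R : ℝ) + 1)
    (hφ : φ = if 3 ≤ R then (S - √(S ^ 2 - 4)) / 2 else 1 / 2) : φ ∈ Set.Ioc 0 (1 / 2) := by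
  split_ifs at hφ with hR
  · have hS4 := four_le_of_eq_ite_even hR hS
    have hlt : √(S ^ 2 - 4) < S := by
      rw [Real.sqrt_lt' (by linarith)]
      linarith
    have hle : S - 1 ≤ √(S ^ 2 - 4) := Real.le_sqrt_of_sq_le (by nlinarith)
    exact ⟨by linarith, by linarith⟩
  · exact ⟨by linarith, hφ.le⟩

theorem theta_two_mul {R : ℕ} (hR : 3 ≤ R) {S φ : ℝ}
    (hS : S = if Even R then (R : ℝ) else (R : ℝ) + 1)
    (hφ : φ = if 3 ≤ R then (S - √(S ^ 2 - 4)) / 2 else 1 / 2) : φ * (max 4 S - φ) = 1 := by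
  have hS4 := four_le_of_eq_ite_even hR hS
  rw [if_pos hR] at hφ
  rw [max_eq_right hS4, hφ]
  linear_combination (-1 / 4) * Real.sq_sqrt (by nlinarith : 0 ≤ S ^ 2 - 4)

theorem bound_mul_eq {s X θ φ M : ℝ} (hs : 3 ≤ s) (hX : 4 ≤ X) (hθ0 : 0 < θ) (hθ1 : θ < 1)
    (hφ : φ ≤ 1 / 2)
    (hM : M = 1 / 4 * (1 - 2 / (s - φ)) * (1 - 1 / X * (1 + θ ^ 2 / (1 - θ))) /
      (1 + 1 / X * (θ - 1 / (s - φ)))) :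
    4 * M * ((s - φ) * (X + θ) - 1) = (X + θ - 1 - θ / (1 - θ)) * (s - φ - 2) := by
  have hsφ : 0 < s - φ := by linarith
  have hθ' : 0 < 1 - θ := by linarith
  have hden : 0 < (s - φ) * (X + θ) - 1 := by nlinarith
  have hden_eq : 1 + 1 / X * (θ - 1 / (s - φ)) = ((s - φ) * (X + θ) - 1) / (X * (s - φ)) := by
    field_simp
    ring
  rw [hM, hden_eq]
  field_simp
  ring

theorem boundConstants_cases {R : ℕ} (hR : 2 ≤ R) {s S φ : ℝ}
    (hs : s = if Odd R then (R : ℝ) else (R : ℝ) + 1)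
    (hS : S = if Even R then (R : ℝ) else (R : ℝ) + 1)
    (hφ : φ = if 3 ≤ R then (S - √(S ^ 2 - 4)) / 2 else 1 / 2) :
    ((R : ℝ) = 2 ∧ s = 3 ∧ max 4 S = 4 ∧ φ = 1 / 2) ∨
      ((R : ℝ) = 3 ∧ s = 3 ∧ max 4 S = 4 ∧ φ * (max 4 S - φ) = 1) ∨
      ((R : ℝ) = 4 ∧ s = 5 ∧ max 4 S = 4 ∧ φ * (max 4 S - φ) = 1) ∨
      (5 ≤ (R : ℝ) ∧ s = R ∧ max 4 S = R + 1 ∧ φ * (max 4 S - φ) = 1) ∨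
      (6 ≤ (R : ℝ) ∧ s = R + 1 ∧ max 4 S = R ∧ φ * (max 4 S - φ) = 1) := by
  obtain rfl | hR3 := hR.eq_or_lt
  · norm_num at hs hS hφ
    left
    norm_num [hs, hS, hφ]
  have hφ' := theta_two_mul hR3 hS hφ
  have hS4 := four_le_of_eq_ite_even hR3 hS
  obtain rfl | rfl | hR5 : R = 3 ∨ R = 4 ∨ 5 ≤ R := by omega
  · have hs3 : s = 3 := by simpa [show Odd 3 by decide] using hs
    have hS3 : S = 4 := by rw [hS, if_neg (by decide)]; norm_num
    exact Or.inr (Or.inl ⟨by norm_num, hs3, by simp [hS3], hφ'⟩)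
  · have hs4 : s = 5 := by rw [hs, if_neg (by decide)]; norm_num
    have hS4 : S = 4 := by simpa [show Even 4 by decide] using hS
    exact Or.inr (Or.inr (Or.inl ⟨by norm_num, hs4, by simp [hS4], hφ'⟩))
  · rw [max_eq_right hS4] at hφ' ⊢
    obtain he | ho := Nat.even_or_odd R
    · rw [if_neg (Nat.not_odd_iff_even.2 he)] at hs
      rw [if_pos he] at hS
      have hR6 : 6 ≤ R := by
        obtain ⟨k, rfl⟩ := he
        omega
      exact Or.inr (Or.inr (Or.inr (Or.inr ⟨by exact_mod_cast hR6, hs, hS, hφ'⟩)))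
    · rw [if_pos ho] at hs
      rw [if_neg (Nat.not_even_iff_odd.2 ho)] at hS
      exact Or.inr (Or.inr (Or.inr (Or.inl ⟨by exact_mod_cast hR5, hs, hS, hφ'⟩)))

theorem boundConstants_of_eq {R : ℕ} (hR : 2 ≤ R) {s S θ φ M : ℝ}
    (hs : s = if Odd R then (R : ℝ) else (R : ℝ) + 1)
    (hS : S = if Even R then (R : ℝ) else (R : ℝ) + 1)
    (hθ : θ = (√(s ^ 2 + 4) - s) / 2)
    (hφ : φ = if 3 ≤ R then (S - √(S ^ 2 - 4)) / 2 else 1 / 2)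
    (hM : M = 1 / 4 * (1 - 2 / (s - φ)) * (1 - 1 / max 4 S * (1 + θ ^ 2 / (1 - θ))) /
      (1 + 1 / max 4 S * (θ - 1 / (s - φ)))) :
    BoundConstants R s (max 4 S) θ (θ / (1 - θ)) φ (4 * M) := by
  have hs3 := three_le_of_eq_ite_odd hR hs
  have hθmul := theta_one_mul hθ
  have hθ0 := theta_one_pos hθ
  have hθ1 : θ < 1 := by nlinarith
  obtain ⟨hφ0, hφ1⟩ := theta_two_mem_Ioc hS hφ
  exact
    { cases := boundConstants_cases hR hs hS hφ
      theta_mul := hθmul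
      theta_pos := hθ0
      eta_mul := div_mul_cancel₀ _ (by linarith)
      phi_pos := hφ0
      phi_le := hφ1
      m_mul := bound_mul_eq hs3 (le_max_left 4 S) hθ0 hθ1 hφ1 hM }

end Parameters

theorem stmt1_general (α : ℝ) (hirr : Irrational α) (h0 : 0 < α) (h12 : α < 1 / 2)
    (R : ℕ) (hR2 : 2 ≤ R)
    (hbd : ∀ᶠ i in Filter.atTop, (R : ℤ) ≤ nicfA α i)
    (Rs Rss θ1 θ2 M1 : ℝ)
    (hRs : Rs = if Odd R then (R : ℝ) else (R : ℝ) + 1)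
    (hRss : Rss = if Even R then (R : ℝ) else (R : ℝ) + 1)
    (hθ1 : θ1 = (Real.sqrt (Rs ^ 2 + 4) - Rs) / 2)
    (hθ2 : θ2 = if 3 ≤ R then (Rss - Real.sqrt (Rss ^ 2 - 4)) / 2 else 1 / 2)
    (hM1 : M1 = 1 / 4 * (1 - 2 / (Rs - θ2)) *
        (1 - 1 / max 4 Rss * (1 + θ1 ^ 2 / (1 - θ1))) /
        (1 + 1 / max 4 Rss * (θ1 - 1 / (Rs - θ2)))) :
    Mval α (gammaStar α) ≥ M1 ∧ rho α ≥ M1 := by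
  have hα : IsNicfTail α := ⟨hirr, h0, h12⟩
  have hconst := boundConstants_of_eq hR2 hRs hRss hθ1 hθ2 hM1
  obtain ⟨K, hK⟩ := eventually_atTop.1 hbd
  have hR (i : ℕ) : (R : ℤ) ≤ nicfA α (K + i + 1) := hK _ (by lia)
  obtain ⟨C, hC, hform⟩ := hα.exists_m_le_mul_abs_form hconst K
    (fun i => by exact_mod_cast hR i) (fun i ho => odd_eq_or_add_two_le ho (hR i) hRs)
    (fun i ho => max_four_le_or_eq_two hR2 ho (hR i) hRss)
  simpa only [mul_div_cancel_left₀ M1 (four_ne_zero' ℝ)] using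
    hα.le_Mval_gammaStar_and_le_rho hconst.m_pos hC hform

/-- Theorem 4: the sharp lower bound `M(α,γ_*) ≥ M_1`, and hence `ρ(α) ≥ M_1`. -/
theorem stmt1 (α : ℝ) (hirr : Irrational α) (h0 : 0 < α) (h12 : α < 1 / 2)
    (R : ℕ) (hR2 : 2 ≤ R)
    (hbd : ∀ᶠ i in Filter.atTop, (R : ℤ) ≤ nicfA α i)
    (hfreq : ∃ᶠ i in Filter.atTop, nicfA α i = (R : ℤ))
    (Rs Rss θ1 θ2 M1 : ℝ)
    (hRs : Rs = if Odd R then (R : ℝ) else (R : ℝ) + 1)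
    (hRss : Rss = if Even R then (R : ℝ) else (R : ℝ) + 1)
    (hθ1 : θ1 = (Real.sqrt (Rs ^ 2 + 4) - Rs) / 2)
    (hθ2 : θ2 = if 3 ≤ R then (Rss - Real.sqrt (Rss ^ 2 - 4)) / 2 else 1 / 2)
    (hM1 : M1 = 1 / 4 * (1 - 2 / (Rs - θ2)) *
        (1 - 1 / max 4 Rss * (1 + θ1 ^ 2 / (1 - θ1))) /
        (1 + 1 / max 4 Rss * (θ1 - 1 / (Rs - θ2)))) :
    Mval α (gammaStar α) ≥ M1 ∧ rho α ≥ M1 :=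
  stmt1_general α hirr h0 h12 R hR2 hbd Rs Rss θ1 θ2 M1 hRs hRss hθ1 hθ2 hM1
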